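/- Let f ∈ W^{2,p}(R^n), 1 ≤ p < ∞. Then the precise representative f* is p-Lipschitz quasicontinuous: for every ε > 0 there exists an open set V ⊂ R^n with cap_p(V) ≤ ε such that f* restricted to R^n \ V is Lipschitz continuous. -/

import Mathlib

open MeasureTheory Metric Filter Set
open scoped ENNReal Topology NNReal

noncomputable section

/-- Euclidean space ℝⁿ. -/
abbrev En (n : ℕ) := EuclideanSpace ℝ (Fin n)

variable {n : ℕ}

/-- The average of `f` over the ball `B(x,r)`. -/
def ballAvg (f : En n → ℝ) (x : En n) (r : ℝ) : ℝ :=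
  ⨍ y in Metric.ball x r, f y

open scoped Classical in
/-- The precise representative of `f`: the limit of ball averages where it exists, `0` otherwise. -/
def preciseRep (f : En n → ℝ) (x : En n) : ℝ :=
  if h : ∃ L : ℝ, Tendsto (fun r => ballAvg f x r) (nhdsWithin 0 (Set.Ioi 0)) (nhds L)
  then h.choose else 0

/-- A test function: smooth, compactly supported, with support inside `Ω`. -/
def IsTest (Ω : Set (En n)) (η : En n → ℝ) : Prop :=
  ContDiff ℝ (⊤ : ℕ∞) η ∧ HasCompactSupport η ∧ tsupport η ⊆ Ω

/-- `g` is the weak partial derivative of `f` in direction `v`, on `Ω`. -/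
def HasWeakPartialOn (Ω : Set (En n)) (f g : En n → ℝ) (v : En n) : Prop :=
  ∀ η : En n → ℝ, IsTest Ω η →
    ∫ x, f x * fderiv ℝ η x v = - ∫ x, g x * η x

/-- `g` is the weak gradient of `f` on `Ω`. -/
def HasWeakGradientOn (Ω : Set (En n)) (f : En n → ℝ) (g : En n → En n) : Prop :=
  ∀ i : Fin n, HasWeakPartialOn Ω f (fun x => g x i) (EuclideanSpace.single i 1)

/-- `f ∈ W^{1,p}(ℝⁿ)` with weak gradient `g`. -/
def MemW1p (p : ℝ) (f : En n → ℝ) (g : En n → En n) : Prop :=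
  AEStronglyMeasurable f volume ∧ AEStronglyMeasurable g volume ∧
  HasWeakGradientOn Set.univ f g ∧
  Integrable (fun x => |f x| ^ p) ∧ Integrable (fun x => ‖g x‖ ^ p)

/-- `f ∈ W^{1,p}_loc(Ω)` with weak gradient `g`. -/
def MemW1pLoc (p : ℝ) (Ω : Set (En n)) (f : En n → ℝ) (g : En n → En n) : Prop :=
  AEStronglyMeasurable f volume ∧ AEStronglyMeasurable g volume ∧
  HasWeakGradientOn Ω f g ∧
  ∀ K : Set (En n), K ⊆ Ω → IsCompact K →
    IntegrableOn (fun x => |f x| ^ p) K ∧ IntegrableOn (fun x => ‖g x‖ ^ p) K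

/-- `f ∈ W^{2,p}_loc(Ω)` with weak gradient `g` and weak second derivatives `h`. -/
def MemW2pLoc (p : ℝ) (Ω : Set (En n)) (f : En n → ℝ)
    (g : En n → En n) (h : En n → Fin n → En n) : Prop :=
  AEStronglyMeasurable f volume ∧ AEStronglyMeasurable g volume ∧
  HasWeakGradientOn Ω f g ∧
  (∀ i : Fin n, HasWeakGradientOn Ω (fun x => g x i) (fun x => h x i)) ∧
  ∀ K : Set (En n), K ⊆ Ω → IsCompact K →
    IntegrableOn (fun x => |f x| ^ p) K ∧ IntegrableOn (fun x => ‖g x‖ ^ p) K ∧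
    ∀ i : Fin n, IntegrableOn (fun x => ‖h x i‖ ^ p) K

/-- `f ∈ W^{2,p}(ℝⁿ)` with weak gradient `g` and weak second derivatives `h`. -/
def MemW2p (p : ℝ) (f : En n → ℝ) (g : En n → En n) (h : En n → Fin n → En n) : Prop :=
  AEStronglyMeasurable f volume ∧ AEStronglyMeasurable g volume ∧
  HasWeakGradientOn Set.univ f g ∧
  (∀ i : Fin n, HasWeakGradientOn Set.univ (fun x => g x i) (fun x => h x i)) ∧
  Integrable (fun x => |f x| ^ p) ∧ Integrable (fun x => ‖g x‖ ^ p) ∧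
  ∀ i : Fin n, Integrable (fun x => ‖h x i‖ ^ p)

/-- The `p`-capacity of a compact set. -/
def capK (p : ℝ) (F : Set (En n)) : ℝ≥0∞ :=
  ⨅ (g : En n → ℝ) (_ : ContDiff ℝ (⊤ : ℕ∞) g ∧ HasCompactSupport g ∧ ∀ x ∈ F, 1 ≤ g x),
    ∫⁻ x, (‖fderiv ℝ g x‖₊ : ℝ≥0∞) ^ p

/-- The `p`-capacity of an open set, by inner regularity over compact subsets. -/
def capOpen (p : ℝ) (U : Set (En n)) : ℝ≥0∞ :=
  ⨆ (F : Set (En n)) (_ : F ⊆ U ∧ IsCompact F), capK p F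

/-- The `p`-capacity of an arbitrary set, by outer regularity over open supersets. -/
def cap (p : ℝ) (E : Set (En n)) : ℝ≥0∞ :=
  ⨅ (U : Set (En n)) (_ : E ⊆ U ∧ IsOpen U), capOpen p U

/-- `f` restricted to `s` is Lipschitz outside a subset of `s` of `p`-capacity zero. -/
def LipschitzOnQE (p : ℝ) (f : En n → ℝ) (s : Set (En n)) : Prop :=
  ∃ N : Set (En n), N ⊆ s ∧ cap p N = 0 ∧ ∃ K : ℝ≥0, LipschitzOnWith K f (s \ N)

/-- The multiplicity function: the number of preimages of `y` in `A` under `φ`. -/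
def Nphi (φ : En n → En n) (A : Set (En n)) (y : En n) : ℝ≥0∞ :=
  Measure.count {x ∈ A | φ x = y}

end

/-!
Let `V_l` be the open set where the maximal function of `∇f` exceeds `l`.

Off `V_l`, the affine homotopy between two balls expresses the difference of the averages of `f`
over them as an integral of `∇f`, which is at most `n 3ⁿ l` times the displacement of the centres
and radii. Hence the averages over the balls shrinking to a point converge, and their limit `f*`
is Lipschitz off `V_l`.

Moreover `cap_p(V_l) ≤ C l⁻ᵖ (‖∇f‖ₚᵖ + ‖∇²f‖ₚᵖ)`, which tends to `0` as `l → ∞`. On a compact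
subset of `V_l`, replace `∇f` by a mollified and cut-off field `G`, and cover the subset by
boundedly overlapping balls on which `|G|` has average at least `l`. On such a ball the Poincaré
inequality bounds the `Lᵖ` norm of the deficit `(l - |G|)₊` by the radius times `‖∇G‖ₚ`, so
extending the deficit by inversion in the sphere and a cutoff costs energy at most `C ∫ |∇G|ᵖ` over
the ball. The sum of `|G|` and the supremum of the extended deficits is at least `l` on the subset,
so up to the factor `l` it is admissible for the capacity.
-/

/-! ### Integral inequalities -/

section Jensen

variable {α : Type*} [MeasurableSpace α] {μ : Measure α} {p : ℝ}

theorem rpow_lintegral_mul_le_lintegral_mul_rpow {w f : α → ℝ≥0∞} (hp : 1 ≤ p)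
    (hw : Measurable w) (hw1 : ∫⁻ x, w x ∂μ = 1) (hf : AEMeasurable f μ) :
    (∫⁻ x, w x * f x ∂μ) ^ p ≤ ∫⁻ x, w x * f x ^ p ∂μ := by
  have hprob : IsProbabilityMeasure (μ.withDensity w) := ⟨by simp [withDensity_apply, hw1]⟩
  have hf' : AEMeasurable f (μ.withDensity w) := hf.mono_ac (withDensity_absolutelyContinuous _ _)
  have hnorm := eLpNorm'_le_eLpNorm'_of_exponent_le (f := f) one_pos hp (μ.withDensity w)
    hf'.aestronglyMeasurable
  simp only [eLpNorm'_eq_lintegral_enorm, enorm_eq_self, ENNReal.rpow_one, div_one] at hnorm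
  rw [lintegral_withDensity_eq_lintegral_mul₀ hw.aemeasurable hf,
    lintegral_withDensity_eq_lintegral_mul₀ hw.aemeasurable (hf.pow_const p), one_div,
    ENNReal.le_rpow_inv_iff (by linarith)] at hnorm
  exact hnorm

theorem rpow_laverage_le_laverage_rpow {f : α → ℝ≥0∞} (hp : 1 ≤ p) {s : Set α} (h₀ : μ s ≠ 0)
    (htop : μ s ≠ ∞) (hf : AEMeasurable f (μ.restrict s)) :
    (⨍⁻ x in s, f x ∂μ) ^ p ≤ ⨍⁻ x in s, f x ^ p ∂μ := by
  have hweight : ∫⁻ _ in s, (μ s)⁻¹ ∂μ = 1 := by simp [ENNReal.inv_mul_cancel h₀ htop]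
  have hjensen := rpow_lintegral_mul_le_lintegral_mul_rpow hp measurable_const hweight hf
  rw [lintegral_const_mul'' _ hf, lintegral_const_mul'' _ (hf.pow_const p)] at hjensen
  simpa only [setLAverage_eq, ENNReal.div_eq_inv_mul] using hjensen

theorem add_rpow_le_two_rpow_mul (hp : 1 ≤ p) (a b : ℝ≥0∞) :
    (a + b) ^ p ≤ 2 ^ p * (a ^ p + b ^ p) := by
  refine (ENNReal.rpow_add_le_mul_rpow_add_rpow a b hp).trans ?_
  gcongr
  · norm_num
  · linarith

end Jensen

section Young

variable {G : Type*} [AddCommGroup G] [MeasurableSpace G] [MeasurableAdd₂ G] [MeasurableNeg G]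
  {μ : Measure G} [μ.IsAddLeftInvariant] [SFinite μ] {w Ψ : G → ℝ≥0∞}

theorem lintegral_lconvolution (hw : Measurable w) (hΨ : AEMeasurable Ψ μ) :
    ∫⁻ x, (w ⋆ₗ[μ] Ψ) x ∂μ = (∫⁻ y, w y ∂μ) * ∫⁻ x, Ψ x ∂μ := by
  have hjoint : AEMeasurable (Function.uncurry fun x y => w y * Ψ (-y + x)) (μ.prod μ) := by
    simp only [Function.uncurry_def]
    fun_prop
  simp only [lconvolution_def]
  rw [lintegral_lintegral_swap hjoint, ← lintegral_mul_const _ hw]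
  refine lintegral_congr fun y => ?_
  rw [lintegral_const_mul'' _ (by fun_prop), lintegral_add_left_eq_self Ψ]

theorem lintegral_lconvolution_rpow_le {p : ℝ} (hp : 1 ≤ p) (hw : Measurable w)
    (hw1 : ∫⁻ y, w y ∂μ = 1) (hΨ : AEMeasurable Ψ μ) :
    ∫⁻ x, (w ⋆ₗ[μ] Ψ) x ^ p ∂μ ≤ ∫⁻ x, Ψ x ^ p ∂μ := by
  have hshift : ∀ x, AEMeasurable (fun y => Ψ (-y + x)) μ := fun x => by
    simp only [neg_add_eq_sub]
    exact hΨ.comp_quasiMeasurePreserving (quasiMeasurePreserving_sub_left_of_right_invariant μ x)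
  calc ∫⁻ x, (w ⋆ₗ[μ] Ψ) x ^ p ∂μ
      ≤ ∫⁻ x, (w ⋆ₗ[μ] fun y => Ψ y ^ p) x ∂μ := lintegral_mono fun x =>
        rpow_lintegral_mul_le_lintegral_mul_rpow hp hw hw1 (hshift x)
    _ = ∫⁻ x, Ψ x ^ p ∂μ := by rw [lintegral_lconvolution hw (hΨ.pow_const p), hw1, one_mul]

end Young

section YoungBall

variable {E : Type*} [NormedAddCommGroup E] [MeasurableSpace E] [BorelSpace E]
  [SecondCountableTopology E] {μ : Measure E} [μ.IsAddLeftInvariant] [SFinite μ]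

theorem setLIntegral_ball_lconvolution_le {w Ψ : E → ℝ≥0∞} {δ : ℝ} (hw : Measurable w)
    (hw1 : ∫⁻ y, w y ∂μ = 1) (hsupp : Function.support w ⊆ ball 0 δ) (hΨ : AEMeasurable Ψ μ)
    (c : E) (ρ : ℝ) :
    ∫⁻ x in ball c ρ, (w ⋆ₗ[μ] Ψ) x ∂μ ≤ ∫⁻ x in ball c (ρ + δ), Ψ x ∂μ := by
  have hmono : ∀ x ∈ ball c ρ, (w ⋆ₗ[μ] Ψ) x ≤ (w ⋆ₗ[μ] (ball c (ρ + δ)).indicator Ψ) x := by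
    refine fun x hx => lintegral_mono fun y => ?_
    by_cases hy : w y = 0
    · simp [hy]
    have hmem : -y + x ∈ ball c (ρ + δ) := by
      have hyδ : ‖y‖ < δ := mem_ball_zero_iff.mp (hsupp hy)
      rw [mem_ball_iff_norm] at hx ⊢
      calc ‖-y + x - c‖ = ‖(x - c) - y‖ := by congr 1; abel
        _ ≤ ‖x - c‖ + ‖y‖ := norm_sub_le _ _
        _ < ρ + δ := by gcongr
    rw [indicator_of_mem hmem]
  calc ∫⁻ x in ball c ρ, (w ⋆ₗ[μ] Ψ) x ∂μ
      ≤ ∫⁻ x in ball c ρ, (w ⋆ₗ[μ] (ball c (ρ + δ)).indicator Ψ) x ∂μ :=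
        setLIntegral_mono' measurableSet_ball hmono
    _ ≤ ∫⁻ x, (w ⋆ₗ[μ] (ball c (ρ + δ)).indicator Ψ) x ∂μ := setLIntegral_le_lintegral _ _
    _ = ∫⁻ x in ball c (ρ + δ), Ψ x ∂μ := by
      rw [lintegral_lconvolution hw (hΨ.indicator measurableSet_ball), hw1, one_mul,
        lintegral_indicator measurableSet_ball]

end YoungBall

/-! ### Folding space into a ball -/

section Fold

variable {E : Type*} [NormedAddCommGroup E] [InnerProductSpace ℝ E]

theorem volume_image_le_of_lipschitzOnWith [FiniteDimensional ℝ E] [MeasurableSpace E]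
    [BorelSpace E] {K : ℝ≥0} {f : E → E} {s : Set E} (hf : LipschitzOnWith K f s) :
    volume (f '' s) ≤ (K : ℝ≥0∞) ^ Module.finrank ℝ E * volume s := by
  have himage := hf.hausdorffMeasure_image_le (d := Module.finrank ℝ E) (by positivity)
  rw [← InnerProductSpace.euclideanHausdorffMeasure_eq_volume (V := E),
    Measure.euclideanHausdorffMeasure_def]
  simp only [Measure.smul_apply, ENNReal.smul_def, smul_eq_mul]
  rw [ENNReal.rpow_natCast] at himage
  rw [mul_left_comm]
  gcongr

open scoped Classical in
/-- The retraction of space onto `closedBall c r` that is the identity on the ball and inverts the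
exterior through the bounding sphere. Composing with it extends functions across that sphere. -/
noncomputable def ballFold (c : E) (r : ℝ) (x : E) : E :=
  if dist x c ≤ r then x else EuclideanGeometry.inversion c r x

variable {c : E} {r : ℝ}

theorem ballFold_of_mem {x : E} (hx : x ∈ closedBall c r) : ballFold c r x = x :=
  if_pos hx

theorem ballFold_of_notMem {x : E} (hx : x ∉ closedBall c r) :
    ballFold c r x = EuclideanGeometry.inversion c r x :=
  if_neg hx

theorem ballFold_mem_closedBall (hr : 0 < r) (x : E) : ballFold c r x ∈ closedBall c r := by
  by_cases hx : x ∈ closedBall c r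
  · rwa [ballFold_of_mem hx]
  · rw [ballFold_of_notMem hx, mem_closedBall, EuclideanGeometry.dist_inversion_center]
    rw [mem_closedBall, not_le] at hx
    rw [div_le_iff₀ (hr.trans hx)]
    nlinarith

theorem norm_smul_sub_le_norm_sub {a b : E} {s : ℝ} (hs : s ≤ 1)
    (hab : 2 * inner ℝ a b ≤ (1 + s) * ‖a‖ ^ 2) : ‖s • a - b‖ ≤ ‖a - b‖ := by
  refine le_of_sq_le_sq ?_ (norm_nonneg _)
  rw [norm_sub_sq_real, norm_sub_sq_real, norm_smul, real_inner_smul_left, mul_pow,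
    Real.norm_eq_abs, sq_abs]
  linarith [mul_nonneg (sub_nonneg.2 hs) (sub_nonneg.2 hab)]

theorem dist_inversion_le_of_mem_closedBall (hr : 0 < r) {x y : E} (hx : x ∈ closedBall c r)
    (hy : y ∉ closedBall c r) : dist (EuclideanGeometry.inversion c r y) x ≤ dist y x := by
  rw [mem_closedBall, not_le, dist_eq_norm] at hy
  rw [mem_closedBall, dist_eq_norm] at hx
  have hy₀ : 0 < ‖y - c‖ := hr.trans hy
  have hscale : (r / ‖y - c‖) ^ 2 * ‖y - c‖ ^ 2 = r ^ 2 := by field_simp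
  have hinner : inner ℝ (y - c) (x - c) ≤ ‖y - c‖ * r :=
    (real_inner_le_norm _ _).trans (by gcongr)
  have hle := norm_smul_sub_le_norm_sub (a := y - c) (b := x - c)
    (pow_le_one₀ (n := 2) (by positivity) ((div_le_one hy₀).2 hy.le))
    (by nlinarith [sq_nonneg (‖y - c‖ - r)])
  calc dist (EuclideanGeometry.inversion c r y) x
      = ‖(r / ‖y - c‖) ^ 2 • (y - c) - (x - c)‖ := by
        simp only [EuclideanGeometry.inversion_def, dist_eq_norm, vsub_eq_sub, vadd_eq_add]
        congr 1
        abel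
    _ ≤ dist y x := by rwa [sub_sub_sub_cancel_right, ← dist_eq_norm y x] at hle

theorem lipschitzOnWith_inversion {d : ℝ} {K : ℝ≥0} (hd : 0 < d) (hK : r ^ 2 ≤ K * d ^ 2) :
    LipschitzOnWith K (EuclideanGeometry.inversion c r) {x | d ≤ dist x c} := by
  refine LipschitzOnWith.of_dist_le_mul fun x (hx : d ≤ dist x c) y (hy : d ≤ dist y c) => ?_
  have hx₀ : 0 < dist x c := hd.trans_le hx
  have hy₀ : 0 < dist y c := hd.trans_le hy
  rw [EuclideanGeometry.dist_inversion_inversion (dist_pos.1 hx₀) (dist_pos.1 hy₀)]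
  gcongr
  rw [div_le_iff₀ (by positivity)]
  refine hK.trans ?_
  rw [sq]
  gcongr

theorem lipschitzWith_ballFold (hr : 0 < r) : LipschitzWith 1 (ballFold c r) := by
  refine LipschitzWith.mk_one fun x y => ?_
  by_cases hx : x ∈ closedBall c r <;> by_cases hy : y ∈ closedBall c r
  · rw [ballFold_of_mem hx, ballFold_of_mem hy]
  · rw [ballFold_of_mem hx, ballFold_of_notMem hy, dist_comm, dist_comm x]
    exact dist_inversion_le_of_mem_closedBall hr hx hy
  · rw [ballFold_of_notMem hx, ballFold_of_mem hy]
    exact dist_inversion_le_of_mem_closedBall hr hy hx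
  · rw [ballFold_of_notMem hx, ballFold_of_notMem hy]
    rw [mem_closedBall, not_le] at hx hy
    have hlip := lipschitzOnWith_inversion (c := c) (r := r) (K := 1) hr (by simp)
    simpa using hlip.dist_le_mul x hx.le y hy.le

theorem ballFold_preimage_inter_closedBall_subset (hr : 0 < r) (A : Set E) :
    ballFold c r ⁻¹' A ∩ closedBall c (2 * r) ⊆ A ∩ closedBall c r ∪
      EuclideanGeometry.inversion c r '' (A ∩ closedBall c r ∩ {x | r / 2 ≤ dist x c}) := by
  rintro x ⟨hxA, hx2⟩
  have hmem := ballFold_mem_closedBall hr (c := c) x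
  by_cases hx : x ∈ closedBall c r
  · rw [mem_preimage, ballFold_of_mem hx] at hxA
    exact .inl ⟨hxA, hx⟩
  · rw [mem_preimage, ballFold_of_notMem hx] at hxA
    rw [ballFold_of_notMem hx] at hmem
    refine .inr ⟨_, ⟨⟨hxA, hmem⟩, ?_⟩, EuclideanGeometry.inversion_inversion c hr.ne' x⟩
    rw [mem_closedBall] at hx hx2
    rw [mem_ofPred_eq, EuclideanGeometry.dist_inversion_center, le_div_iff₀ (by linarith)]
    nlinarith

variable [FiniteDimensional ℝ E] [MeasurableSpace E] [BorelSpace E]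

theorem volume_ballFold_preimage_inter_closedBall_le (hr : 0 < r) (A : Set E) :
    volume (ballFold c r ⁻¹' A ∩ closedBall c (2 * r)) ≤
      (1 + 4 ^ Module.finrank ℝ E) * volume (A ∩ closedBall c r) := by
  have hlip : LipschitzOnWith 4 (EuclideanGeometry.inversion c r) {x | r / 2 ≤ dist x c} :=
    lipschitzOnWith_inversion (by positivity) (by push_cast; linarith)
  set T := A ∩ closedBall c r
  set T' := T ∩ {x | r / 2 ≤ dist x c}
  calc volume (ballFold c r ⁻¹' A ∩ closedBall c (2 * r))
      ≤ volume T + volume (EuclideanGeometry.inversion c r '' T') :=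
        (measure_mono (ballFold_preimage_inter_closedBall_subset hr A)).trans
          (measure_union_le _ _)
    _ ≤ volume T + (4 : ℝ≥0) ^ Module.finrank ℝ E * volume T' := by
        gcongr
        exact volume_image_le_of_lipschitzOnWith (hlip.mono inter_subset_right)
    _ ≤ volume T + 4 ^ Module.finrank ℝ E * volume T := by
        gcongr
        · simp
        · exact inter_subset_left
    _ = (1 + 4 ^ Module.finrank ℝ E) * volume T := by ring

theorem lintegral_comp_ballFold_le (hr : 0 < r) {Ψ : E → ℝ≥0∞} (hΨ : Measurable Ψ) :
    ∫⁻ x in closedBall c (2 * r), Ψ (ballFold c r x) ≤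
      (1 + 4 ^ Module.finrank ℝ E) * ∫⁻ x in closedBall c r, Ψ x := by
  have hmeas : Measurable (ballFold c r) := (lipschitzWith_ballFold hr).continuous.measurable
  rw [← lintegral_map hΨ hmeas, ← smul_eq_mul (1 + 4 ^ _ : ℝ≥0∞), ← lintegral_smul_measure]
  refine lintegral_mono' (Measure.le_iff.2 fun A hA => ?_) le_rfl
  rw [Measure.map_apply hmeas hA, Measure.restrict_apply (hmeas hA), Measure.smul_apply,
    smul_eq_mul, Measure.restrict_apply hA]
  exact volume_ballFold_preimage_inter_closedBall_le hr A

end Fold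

/-! ### A Poincaré inequality on convex sets -/

section Poincare

variable {E : Type*} [NormedAddCommGroup E] [NormedSpace ℝ E]
  {F : Type*} [NormedAddCommGroup F] {G : E → F} {p : ℝ}

section Segment

variable [NormedSpace ℝ F] [CompleteSpace F]

theorem enorm_sub_le_mul_lintegral_enorm_fderiv (hG : ContDiff ℝ 1 G) (a b : E) :
    ‖G b - G a‖ₑ ≤
      ‖b - a‖ₑ * ∫⁻ t in Ioc (0 : ℝ) 1, ‖fderiv ℝ G (AffineMap.lineMap a b t)‖ₑ := by
  have hderiv : ∀ t : ℝ, HasDerivAt (fun t : ℝ => G (AffineMap.lineMap a b t))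
      (fderiv ℝ G (AffineMap.lineMap a b t) (b - a)) t := fun t =>
    (hG.differentiable one_ne_zero _).hasFDerivAt.comp_hasDerivAt t AffineMap.hasDerivAt_lineMap
  have hcont : Continuous fun t : ℝ => fderiv ℝ G (AffineMap.lineMap a b t) :=
    (hG.continuous_fderiv one_ne_zero).comp AffineMap.lineMap_continuous
  have hftc : ∫ t in Ioc (0 : ℝ) 1, fderiv ℝ G (AffineMap.lineMap a b t) (b - a) = G b - G a := by
    rw [← intervalIntegral.integral_of_le zero_le_one,
      intervalIntegral.integral_eq_sub_of_hasDerivAt (fun t _ => hderiv t)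
        ((hcont.clm_apply continuous_const).intervalIntegrable _ _),
      AffineMap.lineMap_apply_one, AffineMap.lineMap_apply_zero]
  rw [← hftc, mul_comm, ← lintegral_mul_const _ hcont.enorm.measurable]
  exact (enorm_integral_le_lintegral_enorm _).trans
    (lintegral_mono fun t => ContinuousLinearMap.le_opENorm _ _)

theorem enorm_sub_rpow_le_mul_lintegral_enorm_fderiv_rpow (hG : ContDiff ℝ 1 G) (hp : 1 ≤ p)
    (a b : E) :
    ‖G b - G a‖ₑ ^ p ≤
      edist b a ^ p * ∫⁻ t in Ioc (0 : ℝ) 1, ‖fderiv ℝ G (AffineMap.lineMap a b t)‖ₑ ^ p := by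
  have hcont : Continuous fun t : ℝ => fderiv ℝ G (AffineMap.lineMap a b t) :=
    (hG.continuous_fderiv one_ne_zero).comp AffineMap.lineMap_continuous
  have hjensen := rpow_laverage_le_laverage_rpow (μ := volume) hp (s := Ioc (0 : ℝ) 1) (by simp)
    (by simp) hcont.enorm.measurable.aemeasurable
  simp only [setLAverage_eq, Real.volume_Ioc, sub_zero, ENNReal.ofReal_one, div_one] at hjensen
  calc ‖G b - G a‖ₑ ^ p
      ≤ (edist b a * ∫⁻ t in Ioc (0 : ℝ) 1, ‖fderiv ℝ G (AffineMap.lineMap a b t)‖ₑ) ^ p := by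
        rw [edist_eq_enorm_sub]
        gcongr
        exact enorm_sub_le_mul_lintegral_enorm_fderiv hG a b
    _ ≤ _ := by
        rw [ENNReal.mul_rpow_of_nonneg _ _ (by linarith)]
        gcongr

end Segment

variable [FiniteDimensional ℝ E] [MeasurableSpace E] [BorelSpace E] {μ : Measure E}
  [μ.IsAddHaarMeasure] {B : Set E} {Φ : E → ℝ≥0∞}

theorem lintegral_comp_lineMap {Φ : E → ℝ≥0∞} (hΦ : Measurable Φ) (x : E) {s : ℝ} (hs : 0 < s) :
    ∫⁻ y, Φ (AffineMap.lineMap x y s) ∂μ =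
      ENNReal.ofReal s⁻¹ ^ Module.finrank ℝ E * ∫⁻ y, Φ y ∂μ := by
  calc ∫⁻ y, Φ (AffineMap.lineMap x y s) ∂μ = ∫⁻ y, Φ (s • (y - x) + x) ∂μ := by
        simp only [AffineMap.lineMap_apply, vsub_eq_sub, vadd_eq_add]
    _ = ∫⁻ y, Φ (s • y + x) ∂μ := lintegral_sub_right_eq_self (fun y => Φ (s • y + x)) x
    _ = ∫⁻ y, Φ (y + x) ∂(μ.map (s • ·)) :=
        (lintegral_map (f := fun y => Φ (y + x)) (by fun_prop) (by fun_prop)).symm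
    _ = ENNReal.ofReal s⁻¹ ^ Module.finrank ℝ E * ∫⁻ y, Φ y ∂μ := by
        rw [Measure.map_addHaar_smul μ hs.ne', lintegral_smul_measure,
          lintegral_add_right_eq_self Φ, smul_eq_mul, abs_of_pos (by positivity), ← inv_pow,
          ENNReal.ofReal_pow (by positivity)]

theorem setLIntegral_comp_lineMap_le (hB : Convex ℝ B) (hBm : MeasurableSet B) {x : E} (hx : x ∈ B)
    {s : ℝ} (hs : 1 / 2 ≤ s) (hs1 : s ≤ 1) (hΦ : Measurable Φ) :
    ∫⁻ y in B, Φ (AffineMap.lineMap x y s) ∂μ ≤ 2 ^ Module.finrank ℝ E * ∫⁻ y in B, Φ y ∂μ := by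
  have hinv : s⁻¹ ≤ 2 := inv_le_of_inv_le₀ (by norm_num) (by simpa using hs)
  calc ∫⁻ y in B, Φ (AffineMap.lineMap x y s) ∂μ
      = ∫⁻ y in B, B.indicator Φ (AffineMap.lineMap x y s) ∂μ :=
        setLIntegral_congr_fun hBm fun y hy => by
          rw [indicator_of_mem (hB.lineMap_mem hx hy ⟨by linarith, hs1⟩)]
    _ ≤ ∫⁻ y, B.indicator Φ (AffineMap.lineMap x y s) ∂μ := setLIntegral_le_lintegral _ _
    _ = ENNReal.ofReal s⁻¹ ^ Module.finrank ℝ E * ∫⁻ y in B, Φ y ∂μ := by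
        rw [lintegral_comp_lineMap (hΦ.indicator hBm) x (by linarith), lintegral_indicator hBm]
    _ ≤ 2 ^ Module.finrank ℝ E * ∫⁻ y in B, Φ y ∂μ := by
        gcongr
        simpa using ENNReal.ofReal_le_ofReal hinv

-- Exchanging `x` and `y` replaces `t` by `1 - t`, so one may assume `1 / 2 ≤ t`.
theorem lintegral_lintegral_comp_lineMap_le (hB : Convex ℝ B) (hBm : MeasurableSet B) {t : ℝ}
    (ht : t ∈ Icc (0 : ℝ) 1) (hΦ : Measurable Φ) :
    ∫⁻ x in B, ∫⁻ y in B, Φ (AffineMap.lineMap x y t) ∂μ ∂μ ≤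
      2 ^ Module.finrank ℝ E * μ B * ∫⁻ y in B, Φ y ∂μ := by
  have hhalf : ∀ s : ℝ, 1 / 2 ≤ s → s ≤ 1 →
      ∫⁻ x in B, ∫⁻ y in B, Φ (AffineMap.lineMap x y s) ∂μ ∂μ ≤
        2 ^ Module.finrank ℝ E * μ B * ∫⁻ y in B, Φ y ∂μ := fun s hs hs1 => by
    calc ∫⁻ x in B, ∫⁻ y in B, Φ (AffineMap.lineMap x y s) ∂μ ∂μ
        ≤ ∫⁻ _ in B, 2 ^ Module.finrank ℝ E * ∫⁻ y in B, Φ y ∂μ ∂μ :=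
          setLIntegral_mono' hBm fun x hx => setLIntegral_comp_lineMap_le hB hBm hx hs hs1 hΦ
      _ = _ := by rw [setLIntegral_const]; ring
  rcases le_total (1 / 2) t with h | h
  · exact hhalf t h ht.2
  · have hmeas : Measurable fun q : E × E => Φ (AffineMap.lineMap q.1 q.2 t) :=
      hΦ.comp (continuous_fst.lineMap continuous_snd continuous_const).measurable
    rw [lintegral_lintegral_swap hmeas.aemeasurable]
    simp only [fun x y : E => (AffineMap.lineMap_apply_one_sub x y t).symm]
    exact hhalf (1 - t) (by linarith) (by linarith [ht.1])

theorem lintegral_lintegral_segment_le (hB : Convex ℝ B) (hBm : MeasurableSet B)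
    (hΦ : Measurable Φ) :
    ∫⁻ x in B, ∫⁻ y in B, (∫⁻ t in Ioc (0 : ℝ) 1, Φ (AffineMap.lineMap x y t)) ∂μ ∂μ ≤
      2 ^ Module.finrank ℝ E * μ B * ∫⁻ y in B, Φ y ∂μ := by
  have hmeas : Measurable fun q : (E × ℝ) × E => Φ (AffineMap.lineMap q.1.1 q.2 q.1.2) :=
    hΦ.comp ((continuous_fst.comp continuous_fst).lineMap continuous_snd
      (continuous_snd.comp continuous_fst)).measurable
  have hswap : ∀ x, ∫⁻ y in B, (∫⁻ t in Ioc (0 : ℝ) 1, Φ (AffineMap.lineMap x y t)) ∂μ =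
      ∫⁻ t in Ioc (0 : ℝ) 1, ∫⁻ y in B, Φ (AffineMap.lineMap x y t) ∂μ := fun x =>
    lintegral_lintegral_swap
      (hmeas.comp (f := fun q : E × ℝ => ((x, q.2), q.1)) (by fun_prop)).aemeasurable
  calc ∫⁻ x in B, ∫⁻ y in B, (∫⁻ t in Ioc (0 : ℝ) 1, Φ (AffineMap.lineMap x y t)) ∂μ ∂μ
      = ∫⁻ t in Ioc (0 : ℝ) 1, ∫⁻ x in B, ∫⁻ y in B, Φ (AffineMap.lineMap x y t) ∂μ ∂μ := by
        simp only [hswap]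
        exact lintegral_lintegral_swap hmeas.lintegral_prod_right'.aemeasurable
    _ ≤ ∫⁻ _ in Ioc (0 : ℝ) 1, 2 ^ Module.finrank ℝ E * μ B * ∫⁻ y in B, Φ y ∂μ :=
        setLIntegral_mono' measurableSet_Ioc fun t ht =>
          lintegral_lintegral_comp_lineMap_le hB hBm (Ioc_subset_Icc_self ht) hΦ
    _ = 2 ^ Module.finrank ℝ E * μ B * ∫⁻ y in B, Φ y ∂μ := by simp

variable [NormedSpace ℝ F] [CompleteSpace F]

theorem lintegral_lintegral_enorm_sub_rpow_le (hG : ContDiff ℝ 1 G) (hp : 1 ≤ p)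
    (hB : Convex ℝ B) (hBm : MeasurableSet B) :
    ∫⁻ x in B, ∫⁻ y in B, ‖G y - G x‖ₑ ^ p ∂μ ∂μ ≤
      ediam B ^ p * (2 ^ Module.finrank ℝ E * μ B * ∫⁻ y in B, ‖fderiv ℝ G y‖ₑ ^ p ∂μ) := by
  have hΦ : Measurable fun x => ‖fderiv ℝ G x‖ₑ ^ p :=
    (hG.continuous_fderiv one_ne_zero).enorm.measurable.pow_const p
  have hmeas : Measurable fun q : E × E =>
      ∫⁻ t in Ioc (0 : ℝ) 1, ‖fderiv ℝ G (AffineMap.lineMap q.1 q.2 t)‖ₑ ^ p :=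
    (hΦ.comp ((continuous_fst.comp continuous_fst).lineMap (continuous_snd.comp continuous_fst)
      continuous_snd).measurable).lintegral_prod_right'
  calc ∫⁻ x in B, ∫⁻ y in B, ‖G y - G x‖ₑ ^ p ∂μ ∂μ
      ≤ ∫⁻ x in B, ∫⁻ y in B, ediam B ^ p *
          (∫⁻ t in Ioc (0 : ℝ) 1, ‖fderiv ℝ G (AffineMap.lineMap x y t)‖ₑ ^ p) ∂μ ∂μ := by
        refine setLIntegral_mono' hBm fun x hx => setLIntegral_mono' hBm fun y hy => ?_
        refine (enorm_sub_rpow_le_mul_lintegral_enorm_fderiv_rpow hG hp x y).trans ?_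
        gcongr
        exact edist_le_ediam_of_mem hy hx
    _ = ediam B ^ p * ∫⁻ x in B, ∫⁻ y in B,
          (∫⁻ t in Ioc (0 : ℝ) 1, ‖fderiv ℝ G (AffineMap.lineMap x y t)‖ₑ ^ p) ∂μ ∂μ := by
        rw [← lintegral_const_mul _ hmeas.lintegral_prod_right']
        exact lintegral_congr fun x => lintegral_const_mul _ <|
          hmeas.comp (f := fun y => (x, y)) (by fun_prop)
    _ ≤ _ := by
        gcongr
        exact lintegral_lintegral_segment_le hB hBm hΦ

theorem lintegral_laverage_enorm_sub_rpow_le (hG : ContDiff ℝ 1 G) (hp : 1 ≤ p)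
    (hB : Convex ℝ B) (hBm : MeasurableSet B) (h₀ : μ B ≠ 0) (htop : μ B ≠ ∞) :
    ∫⁻ x in B, (⨍⁻ y in B, ‖G y - G x‖ₑ ∂μ) ^ p ∂μ ≤
      2 ^ Module.finrank ℝ E * ediam B ^ p * ∫⁻ y in B, ‖fderiv ℝ G y‖ₑ ^ p ∂μ := by
  have hcont : Continuous G := hG.continuous
  have hmeas : Measurable fun q : E × E => ‖G q.2 - G q.1‖ₑ ^ p :=
    (Continuous.enorm (by fun_prop)).measurable.pow_const p
  calc ∫⁻ x in B, (⨍⁻ y in B, ‖G y - G x‖ₑ ∂μ) ^ p ∂μ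
      ≤ ∫⁻ x in B, ⨍⁻ y in B, ‖G y - G x‖ₑ ^ p ∂μ ∂μ := lintegral_mono fun x =>
        rpow_laverage_le_laverage_rpow hp h₀ htop
          (Continuous.enorm (by fun_prop)).measurable.aemeasurable
    _ = (μ B)⁻¹ * ∫⁻ x in B, ∫⁻ y in B, ‖G y - G x‖ₑ ^ p ∂μ ∂μ := by
        simp only [setLAverage_eq, ENNReal.div_eq_inv_mul]
        exact lintegral_const_mul _ hmeas.lintegral_prod_right'
    _ ≤ (μ B)⁻¹ * (ediam B ^ p *
          (2 ^ Module.finrank ℝ E * μ B * ∫⁻ y in B, ‖fderiv ℝ G y‖ₑ ^ p ∂μ)) := by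
        gcongr
        exact lintegral_lintegral_enorm_sub_rpow_le hG hp hB hBm
    _ = ((μ B)⁻¹ * μ B) * (2 ^ Module.finrank ℝ E * ediam B ^ p *
          ∫⁻ y in B, ‖fderiv ℝ G y‖ₑ ^ p ∂μ) := by ring
    _ = _ := by rw [ENNReal.inv_mul_cancel h₀ htop, one_mul]

end Poincare

theorem sub_enorm_le_laverage_enorm_sub {α F : Type*} [MeasurableSpace α] [NormedAddCommGroup F]
    {μ : Measure α} {G : α → F} {s : Set α} (h₀ : μ s ≠ 0) (htop : μ s ≠ ∞) {l : ℝ≥0∞}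
    (hl : l ≤ ⨍⁻ y in s, ‖G y‖ₑ ∂μ) (x : α) :
    l - ‖G x‖ₑ ≤ ⨍⁻ y in s, ‖G y - G x‖ₑ ∂μ := by
  rw [tsub_le_iff_right]
  calc l ≤ ⨍⁻ y in s, ‖G y‖ₑ ∂μ := hl
    _ ≤ ⨍⁻ y in s, (‖G y - G x‖ₑ + ‖G x‖ₑ) ∂μ :=
        lintegral_mono fun y => by simpa using enorm_add_le (G y - G x) (G x)
    _ = ⨍⁻ y in s, ‖G y - G x‖ₑ ∂μ + ‖G x‖ₑ := by
        rw [laverage_eq', lintegral_add_right _ measurable_const, ← laverage_eq', ← laverage_eq',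
          setLAverage_const h₀ htop]

/-! ### Pointwise slopes and Lipschitz test functions -/

section Slope

theorem edist_mul_mul_le_enorm_mul_add {R : Type*} [NormedDivisionRing R] (a b c d : R) :
    edist (a * b) (c * d) ≤ ‖a‖ₑ * edist b d + edist a c * ‖d‖ₑ := by
  have hsplit : a * b - c * d = a * (b - d) + (a - c) * d := by noncomm_ring
  simp only [edist_eq_enorm_sub, hsplit, ← enorm_mul]
  exact enorm_add_le _ _

/-- The pointwise Lipschitz constant (local slope) of `u` at `x` is at most `a`. Unlike a bound on
the derivative, this makes sense at points of non-differentiability and is stable under maxima. -/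
def SlopeLE {X Y : Type*} [PseudoEMetricSpace X] [PseudoEMetricSpace Y] (u : X → Y) (x : X)
    (a : ℝ≥0∞) : Prop :=
  ∀ b, a < b → ∀ᶠ y in 𝓝 x, edist (u y) (u x) ≤ b * edist y x

namespace SlopeLE

section Comp

variable {X Y Z : Type*} [PseudoEMetricSpace X] [PseudoEMetricSpace Y] [PseudoEMetricSpace Z]

theorem of_eventuallyEq_const {u : X → Y} {x : X} {y₀ : Y} (hu : u =ᶠ[𝓝 x] fun _ => y₀)
    (a : ℝ≥0∞) : SlopeLE u x a := by
  intro b _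
  filter_upwards [hu] with y hy
  rw [hy, hu.eq_of_nhds, edist_self]
  exact zero_le

theorem comp_lipschitz {u : Y → Z} {T : X → Y} {x : X} {a : ℝ≥0∞} (hu : SlopeLE u (T x) a)
    (hT : LipschitzWith 1 T) : SlopeLE (u ∘ T) x a := by
  intro b hb
  filter_upwards [hT.continuous.continuousAt.eventually (hu b hb)] with y hy
  refine hy.trans ?_
  gcongr
  simpa using hT y x

theorem lipschitz_comp {φ : Y → Z} {u : X → Y} {x : X} {a : ℝ≥0∞} (hφ : LipschitzWith 1 φ)
    (hu : SlopeLE u x a) : SlopeLE (φ ∘ u) x a := by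
  intro b hb
  filter_upwards [hu b hb] with y hy
  simpa using (hφ (u y) (u x)).trans (by simpa using hy)

end Comp

section Real

variable {X : Type*} [PseudoEMetricSpace X] {u v : X → ℝ} {x : X} {a b : ℝ≥0∞}

theorem add (hu : SlopeLE u x a) (hv : SlopeLE v x b) :
    SlopeLE (fun y => u y + v y) x (a + b) := by
  intro c hc
  obtain ⟨d, had, hdc⟩ := exists_between (lt_tsub_iff_right.2 hc)
  have hbd : b < c - d := lt_tsub_iff_left.2 (lt_tsub_iff_right.1 hdc)
  filter_upwards [hu d had, hv (c - d) hbd] with y huy hvy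
  calc edist (u y + v y) (u x + v x) ≤ edist (u y) (u x) + edist (v y) (v x) :=
        edist_add_add_le _ _ _ _
    _ ≤ d * edist y x + (c - d) * edist y x := add_le_add huy hvy
    _ = c * edist y x := by rw [← add_mul, add_tsub_cancel_of_le (hdc.le.trans tsub_le_self)]

theorem max (hu : SlopeLE u x a) (hv : SlopeLE v x b) :
    SlopeLE (fun y => max (u y) (v y)) x (max a b) := by
  intro c hc
  filter_upwards [hu c ((le_max_left _ _).trans_lt hc), hv c ((le_max_right _ _).trans_lt hc)]
    with y huy hvy
  simp only [edist_dist, Real.dist_eq] at *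
  refine (ENNReal.ofReal_le_ofReal (abs_max_sub_max_le_max _ _ _ _)).trans ?_
  rw [ENNReal.ofReal_max]
  exact max_le huy hvy

theorem mul_lipschitz {χ : X → ℝ} {k : ℝ≥0} (hχ : LipschitzWith k χ) (hχ1 : ∀ y, ‖χ y‖ₑ ≤ 1)
    (hu : SlopeLE u x a) : SlopeLE (fun y => χ y * u y) x (a + k * ‖u x‖ₑ) := by
  intro c hc
  have hkc : k * ‖u x‖ₑ ≤ c := le_add_self.trans hc.le
  filter_upwards [hu _ (lt_tsub_iff_right.2 hc)] with y hy
  calc edist (χ y * u y) (χ x * u x)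
      ≤ ‖χ y‖ₑ * edist (u y) (u x) + edist (χ y) (χ x) * ‖u x‖ₑ :=
        edist_mul_mul_le_enorm_mul_add _ _ _ _
    _ ≤ 1 * ((c - k * ‖u x‖ₑ) * edist y x) + k * edist y x * ‖u x‖ₑ := by
        gcongr
        exacts [hχ1 y, hχ y x]
    _ = (c - k * ‖u x‖ₑ + k * ‖u x‖ₑ) * edist y x := by ring
    _ = c * edist y x := by rw [tsub_add_cancel_of_le hkc]

end Real

section Deriv

variable {E F : Type*} [NormedAddCommGroup E] [NormedSpace ℝ E] [NormedAddCommGroup F]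
  [NormedSpace ℝ F] {u : E → F} {x : E}

theorem of_hasFDerivAt {u' : E →L[ℝ] F} (hu : HasFDerivAt u u' x) : SlopeLE u x ‖u'‖ₑ := by
  intro b hb
  obtain ⟨b', hub', hb'b⟩ := ENNReal.lt_iff_exists_nnreal_btwn.1 hb
  have hpos : 0 < (b' : ℝ) - ‖u'‖ := sub_pos.2 (by exact_mod_cast hub')
  filter_upwards [hu.isLittleO.def hpos] with y hy
  have hreal : dist (u y) (u x) ≤ b' * dist y x := by
    rw [dist_eq_norm, dist_eq_norm]
    calc ‖u y - u x‖ ≤ ‖u y - u x - u' (y - x)‖ + ‖u' (y - x)‖ := by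
          simpa using norm_add_le (u y - u x - u' (y - x)) (u' (y - x))
      _ ≤ (b' - ‖u'‖) * ‖y - x‖ + ‖u'‖ * ‖y - x‖ := add_le_add hy (u'.le_opNorm _)
      _ = b' * ‖y - x‖ := by ring
  calc edist (u y) (u x) ≤ b' * edist y x := by
        simp only [edist_nndist, ← ENNReal.coe_mul, ENNReal.coe_le_coe]
        exact_mod_cast hreal
    _ ≤ b * edist y x := by gcongr

theorem enorm_fderiv_le {a : ℝ≥0∞} (hu : SlopeLE u x a) : ‖fderiv ℝ u x‖ₑ ≤ a := by
  by_cases hd : DifferentiableAt ℝ u x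
  · refine le_of_forall_gt_imp_ge_of_dense fun b hb => ?_
    rcases eq_or_ne b ∞ with rfl | hb'
    · exact le_top
    lift b to ℝ≥0 using hb'
    have hlip : ∀ᶠ y in 𝓝 x, ‖u y - u x‖ ≤ b * ‖y - x‖ := by
      filter_upwards [hu b hb] with y hy
      rw [edist_nndist, edist_nndist, ← ENNReal.coe_mul, ENNReal.coe_le_coe] at hy
      simpa only [dist_eq_norm, NNReal.coe_mul, coe_nndist] using NNReal.coe_le_coe.2 hy
    exact_mod_cast hd.hasFDerivAt.le_of_lip' b.2 hlip
  · rw [fderiv_zero_of_not_differentiableAt hd, enorm_eq_nnnorm, nnnorm_zero]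
    exact zero_le

end Deriv

end SlopeLE

end Slope

section LipschitzTest

variable {X : Type*} [PseudoEMetricSpace X]

/-- A compactly supported Lipschitz function `u` whose slope is at most `A`; these are admissible,
up to mollification, in the definition of capacity. -/
structure IsLipschitzTest (u : X → ℝ) (A : X → ℝ≥0∞) : Prop where
  lipschitz : ∃ K, LipschitzWith K u
  hasCompactSupport : HasCompactSupport u
  slopeLE : ∀ x, SlopeLE u x (A x)

namespace IsLipschitzTest

variable {u v : X → ℝ} {A B : X → ℝ≥0∞}

theorem zero : IsLipschitzTest (fun _ : X => (0 : ℝ)) 0 where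
  lipschitz := ⟨0, LipschitzWith.const 0⟩
  hasCompactSupport := HasCompactSupport.zero
  slopeLE _ := .of_eventuallyEq_const (.refl _ _) _

theorem add (hu : IsLipschitzTest u A) (hv : IsLipschitzTest v B) :
    IsLipschitzTest (fun x => u x + v x) fun x => A x + B x where
  lipschitz :=
    let ⟨_, hK⟩ := hu.lipschitz
    let ⟨_, hL⟩ := hv.lipschitz
    ⟨_, hK.add hL⟩
  hasCompactSupport := hu.hasCompactSupport.add hv.hasCompactSupport
  slopeLE x := (hu.slopeLE x).add (hv.slopeLE x)

theorem max (hu : IsLipschitzTest u A) (hv : IsLipschitzTest v B) :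
    IsLipschitzTest (fun x => max (u x) (v x)) fun x => max (A x) (B x) where
  lipschitz :=
    let ⟨_, hK⟩ := hu.lipschitz
    let ⟨_, hL⟩ := hv.lipschitz
    ⟨_, hK.max hL⟩
  hasCompactSupport := hu.hasCompactSupport.comp₂_left hv.hasCompactSupport (max_self 0)
  slopeLE x := (hu.slopeLE x).max (hv.slopeLE x)

theorem exists_finset_sup {ι : Type*} (s : Finset ι) {u : ι → X → ℝ} {A : ι → X → ℝ≥0∞}
    (hu : ∀ i ∈ s, IsLipschitzTest (u i) (A i)) :
    ∃ v : X → ℝ, IsLipschitzTest v (fun x => s.sup fun i => A i x) ∧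
      ∀ i ∈ s, ∀ x, u i x ≤ v x := by
  classical
  induction s using Finset.induction_on with
  | empty => exact ⟨fun _ => 0, zero, by simp⟩
  | insert i s _ ih =>
    obtain ⟨v, hv, huv⟩ := ih fun j hj => hu j (Finset.mem_insert_of_mem hj)
    refine ⟨fun x => Max.max (u i x) (v x), ?_, ?_⟩
    · simpa only [Finset.sup_insert] using (hu i (Finset.mem_insert_self _ _)).max hv
    · refine Finset.forall_mem_insert _ _ _ |>.2 ⟨fun x => le_max_left _ _, fun j hj x => ?_⟩
      exact (huv j hj x).trans (le_max_right _ _)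

end IsLipschitzTest

theorem finset_sup_rpow_le_sum_rpow {ι : Type*} (s : Finset ι) (a : ι → ℝ≥0∞) {p : ℝ}
    (hp : 0 < p) : (s.sup a) ^ p ≤ ∑ i ∈ s, a i ^ p := by
  rw [Finset.apply_sup_eq_sup_comp (· ^ p)]
  · exact Finset.sup_le fun i hi => Finset.single_le_sum (f := fun i => a i ^ p) (by simp) hi
  · exact fun x y => (ENNReal.monotone_rpow_of_nonneg hp.le).map_max
  · exact ENNReal.zero_rpow_of_pos hp

end LipschitzTest

/-! ### Mollification -/

section Mollify

variable {E : Type*} [NormedAddCommGroup E] [NormedSpace ℝ E] [HasContDiffBump E] [MeasureSpace E]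

/-- The mollification of a vector-valued function by a normalized bump function. -/
noncomputable def mollify {F : Type*} [NormedAddCommGroup F] [NormedSpace ℝ F]
    (φ : ContDiffBump (0 : E)) (f : E → F) : E → F :=
  convolution (φ.normed volume) f (ContinuousLinearMap.lsmul ℝ ℝ) volume

/-- A normalized bump function as an extended nonnegative weight, against which the (extended)
norms of mollifications are estimated. -/
noncomputable def bumpDensity (φ : ContDiffBump (0 : E)) (y : E) : ℝ≥0∞ :=
  ‖φ.normed volume y‖ₑ

variable (φ : ContDiffBump (0 : E))

theorem mollify_apply {F : Type*} [NormedAddCommGroup F] [NormedSpace ℝ F] (f : E → F) (x : E) :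
    mollify φ f x = ∫ y, φ.normed volume y • f (x - y) := rfl

theorem enorm_mollify_le {F : Type*} [NormedAddCommGroup F] [NormedSpace ℝ F] (f : E → F) (x : E) :
    ‖mollify φ f x‖ₑ ≤ (bumpDensity φ ⋆ₗ[volume] fun y => ‖f y‖ₑ) x := by
  refine (enorm_integral_le_lintegral_enorm _).trans_eq ?_
  simp [lconvolution_def, enorm_smul, bumpDensity, neg_add_eq_sub]

variable [BorelSpace E]

theorem measurable_bumpDensity : Measurable (bumpDensity φ) :=
  φ.continuous_normed.enorm.measurable

variable [FiniteDimensional ℝ E] [(volume : Measure E).IsAddHaarMeasure]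

theorem lintegral_bumpDensity : ∫⁻ y, bumpDensity φ y = 1 := by
  rw [← ENNReal.ofReal_one, ← φ.integral_normed (μ := volume),
    ofReal_integral_eq_lintegral_ofReal φ.integrable_normed (.of_forall φ.nonneg_normed)]
  exact lintegral_congr fun y => Real.enorm_eq_ofReal (φ.nonneg_normed y)

theorem support_bumpDensity : Function.support (bumpDensity φ) = ball 0 φ.rOut := by
  rw [← φ.support_normed_eq (μ := volume)]
  ext y
  simp [bumpDensity]

theorem contDiff_mollify {F : Type*} [NormedAddCommGroup F] [NormedSpace ℝ F] {f : E → F}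
    (hf : LocallyIntegrable f) : ContDiff ℝ (⊤ : ℕ∞) (mollify φ f) :=
  φ.hasCompactSupport_normed.contDiff_convolution_left _ φ.contDiff_normed hf

theorem hasFDerivAt_mollify_of_lipschitzWith {v : E → ℝ} {K : ℝ≥0} (hv : LipschitzWith K v)
    (x : E) : HasFDerivAt (mollify φ v) (mollify φ (fderiv ℝ v) x) x := by
  have hcont : ∀ y, Continuous fun t => φ.normed volume t • v (y - t) := fun y =>
    φ.continuous_normed.smul (hv.continuous.comp (by fun_prop))
  have hdiff : ∀ᵐ t : E, DifferentiableAt ℝ v (x - t) :=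
    (quasiMeasurePreserving_sub_left_of_right_invariant volume x).ae hv.ae_differentiableAt
  refine hasFDerivAt_integral_of_dominated_loc_of_lip (𝕜 := ℝ)
    (bound := fun t => φ.normed volume t * K) univ_mem
    (.of_forall fun y => (hcont y).aestronglyMeasurable)
    ((hcont x).integrable_of_hasCompactSupport φ.hasCompactSupport_normed.smul_right) ?_ ?_
    (φ.integrable_normed.mul_const _) ?_ |>.2
  · exact φ.continuous_normed.aestronglyMeasurable.smul
      ((measurable_fderiv ℝ v).comp (by fun_prop)).aestronglyMeasurable
  · refine .of_forall fun t => LipschitzOnWith.of_dist_le_mul fun y _ z _ => ?_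
    calc dist (φ.normed volume t • v (y - t)) (φ.normed volume t • v (z - t))
        ≤ ‖φ.normed volume t‖ * dist (v (y - t)) (v (z - t)) := dist_smul_le _ _ _
      _ ≤ ‖φ.normed volume t‖ * (K * dist y z) := by
          gcongr
          simpa using hv.dist_le_mul (y - t) (z - t)
      _ = _ := by simp [mul_assoc]
  · filter_upwards [hdiff] with t ht
    exact (ht.hasFDerivAt.comp x ((hasFDerivAt_id x).sub_const t)).const_smul (φ.normed volume t)

theorem lintegral_enorm_mollify_rpow_le {F : Type*} [NormedAddCommGroup F] [NormedSpace ℝ F]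
    {f : E → F} (hf : AEStronglyMeasurable f) {p : ℝ} (hp : 1 ≤ p) :
    ∫⁻ x, ‖mollify φ f x‖ₑ ^ p ≤ ∫⁻ x, ‖f x‖ₑ ^ p := by
  refine le_trans ?_ (lintegral_lconvolution_rpow_le hp (measurable_bumpDensity φ)
    (lintegral_bumpDensity φ) hf.enorm)
  gcongr with x
  exact enorm_mollify_le φ f x

end Mollify

section Capacity

variable {n : ℕ} {p : ℝ}

theorem capK_le_lintegral_enorm_fderiv_rpow {w : En n → ℝ} (hw : ContDiff ℝ (⊤ : ℕ∞) w)
    (hwc : HasCompactSupport w) (hp : 0 ≤ p) {F : Set (En n)} {l : ℝ≥0} (hl : l ≠ 0)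
    (hF : ∀ x ∈ F, l ≤ w x) :
    capK p F ≤ (l : ℝ≥0∞)⁻¹ ^ p * ∫⁻ x, ‖fderiv ℝ w x‖ₑ ^ p := by
  have hadm : ∀ x ∈ F, 1 ≤ (l : ℝ)⁻¹ • w x := fun x hx => by
    rw [smul_eq_mul, inv_mul_eq_div, one_le_div (by positivity)]
    exact hF x hx
  refine (iInf₂_le (fun x => (l : ℝ)⁻¹ • w x)
    ⟨hw.const_smul _, hwc.smul_left (f := fun _ => (l : ℝ)⁻¹), hadm⟩).trans_eq ?_
  rw [← lintegral_const_mul _ ((measurable_fderiv ℝ w).enorm.pow_const p)]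
  refine lintegral_congr fun x => ?_
  rw [fderiv_fun_const_smul (hw.differentiable (by simp) x), ← enorm_eq_nnnorm, enorm_smul,
    ENNReal.mul_rpow_of_nonneg _ _ hp, ← NNReal.coe_inv, NNReal.enorm_eq, ENNReal.coe_inv hl]

theorem IsLipschitzTest.capK_le {u : En n → ℝ} {A : En n → ℝ≥0∞} (hu : IsLipschitzTest u A)
    (hp : 1 ≤ p) {F : Set (En n)} {l : ℝ≥0} (hl : l ≠ 0) (hF : ∀ x ∈ F, l ≤ u x) :
    capK p F ≤ (2 / l : ℝ≥0∞) ^ p * ∫⁻ x, A x ^ p := by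
  obtain ⟨K, hK⟩ := hu.lipschitz
  set δ : ℝ := l / (2 * (K + 1)) with hδ
  have hδ0 : 0 < δ := by positivity
  let φ : ContDiffBump (0 : En n) := ⟨δ / 2, δ, by positivity, by linarith⟩
  have hclose : ∀ x, dist (mollify φ u x) (u x) ≤ l / 2 := fun x => by
    refine φ.dist_normed_convolution_le hK.continuous.aestronglyMeasurable fun y hy => ?_
    calc dist (u y) (u x) ≤ K * dist y x := hK.dist_le_mul y x
      _ ≤ (K + 1) * δ := by gcongr; exacts [by linarith, (mem_ball.1 hy).le]
      _ = l / 2 := by rw [hδ]; field_simp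
  have hbelow : ∀ x ∈ F, ((l / 2 : ℝ≥0) : ℝ) ≤ mollify φ u x := fun x hx => by
    have := (abs_le.1 (hclose x)).1
    push_cast
    linarith [hF x hx]
  calc capK p F ≤ ((l / 2 : ℝ≥0) : ℝ≥0∞)⁻¹ ^ p * ∫⁻ x, ‖fderiv ℝ (mollify φ u) x‖ₑ ^ p :=
        capK_le_lintegral_enorm_fderiv_rpow (contDiff_mollify φ hK.continuous.locallyIntegrable)
          (φ.hasCompactSupport_normed.convolution _ hu.hasCompactSupport) (by linarith)
          (by positivity) hbelow
    _ = (2 / l) ^ p * ∫⁻ x, ‖mollify φ (fderiv ℝ u) x‖ₑ ^ p := by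
        rw [ENNReal.coe_div two_ne_zero, ENNReal.inv_div (by simp) (by simp), ENNReal.coe_ofNat]
        simp_rw [fun x => (hasFDerivAt_mollify_of_lipschitzWith φ hK x).fderiv]
    _ ≤ (2 / l) ^ p * ∫⁻ x, ‖fderiv ℝ u x‖ₑ ^ p := by
        gcongr (2 / (l : ℝ≥0∞)) ^ p * ?_
        exact lintegral_enorm_mollify_rpow_le φ (measurable_fderiv ℝ u).aestronglyMeasurable hp
    _ ≤ (2 / l) ^ p * ∫⁻ x, A x ^ p := by
        gcongr with x
        exact (hu.slopeLE x).enorm_fderiv_le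

end Capacity

/-! ### Extension from a ball -/

section RadialCutoff

variable {X : Type*} [PseudoMetricSpace X] {c x : X} {r : ℝ}

/-- The piecewise linear cutoff equal to `1` on `closedBall c r` and to `0` off `ball c (2 * r)`. -/
noncomputable def radialCutoff (c : X) (r : ℝ) (x : X) : ℝ :=
  max 0 (min 1 (2 - dist x c / r))

theorem enorm_radialCutoff_le_one (c : X) (r : ℝ) (x : X) : ‖radialCutoff c r x‖ₑ ≤ 1 := by
  rw [radialCutoff, Real.enorm_eq_ofReal (le_max_left _ _), ENNReal.ofReal_le_one]
  exact max_le zero_le_one (min_le_left _ _)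

theorem radialCutoff_eq_one (hr : 0 < r) (hx : x ∈ closedBall c r) : radialCutoff c r x = 1 := by
  have : dist x c / r ≤ 1 := (div_le_one hr).2 hx
  rw [radialCutoff, min_eq_left (by linarith), max_eq_right zero_le_one]

theorem radialCutoff_eq_zero (hr : 0 < r) (hx : x ∉ ball c (2 * r)) : radialCutoff c r x = 0 := by
  rw [mem_ball, not_lt] at hx
  have : 2 ≤ dist x c / r := (le_div_iff₀ hr).2 hx
  exact max_eq_left ((min_le_right _ _).trans (by linarith))

theorem lipschitzWith_radialCutoff (c : X) (hr : 0 < r) :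
    LipschitzWith r⁻¹.toNNReal (radialCutoff c r) := by
  refine LipschitzWith.const_max (LipschitzWith.const_min (LipschitzWith.of_dist_le_mul ?_) 1) 0
  intro x y
  rw [Real.coe_toNNReal _ (by positivity), dist_sub_left, Real.dist_eq, ← sub_div, abs_div,
    abs_of_pos hr, div_eq_inv_mul]
  gcongr
  exact abs_dist_sub_le x y c

end RadialCutoff

section Extension

variable {E : Type*} [NormedAddCommGroup E] [InnerProductSpace ℝ E]

/-- The extension of a function on `closedBall c r` to the whole space: reflect across the sphere,
then cut off. -/
noncomputable def ballExtension (u : E → ℝ) (c : E) (r : ℝ) (x : E) : ℝ :=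
  radialCutoff c r x * u (ballFold c r x)

/-- The bound on the slope of `ballExtension u c r` resulting from a bound `a` on the slope
of `u`. -/
noncomputable def ballExtensionSlope (u : E → ℝ) (a : E → ℝ≥0∞) (c : E) (r : ℝ) : E → ℝ≥0∞ :=
  (closedBall c (2 * r)).indicator fun x =>
    a (ballFold c r x) + ENNReal.ofReal r⁻¹ * ‖u (ballFold c r x)‖ₑ

variable {u : E → ℝ} {a : E → ℝ≥0∞} {c : E} {r : ℝ}

theorem ballExtension_of_mem (hr : 0 < r) {x : E} (hx : x ∈ closedBall c r) :
    ballExtension u c r x = u x := by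
  rw [ballExtension, radialCutoff_eq_one hr hx, one_mul, ballFold_of_mem hx]

theorem ballExtension_of_notMem (hr : 0 < r) {x : E} (hx : x ∉ ball c (2 * r)) :
    ballExtension u c r x = 0 := by
  rw [ballExtension, radialCutoff_eq_zero hr hx, zero_mul]

theorem lipschitzWith_ballExtension (hr : 0 < r) {K : ℝ≥0} (hu : LipschitzWith K u) :
    LipschitzWith (K + r⁻¹.toNNReal * (‖u c‖₊ + K * r.toNNReal)) (ballExtension u c r) := by
  have hbound : ∀ x, ‖u (ballFold c r x)‖ₑ ≤ ‖u c‖ₑ + K * ENNReal.ofReal r := fun x => by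
    have hdist : edist (ballFold c r x) c ≤ ENNReal.ofReal r :=
      (edist_le_ofReal hr.le).2 (ballFold_mem_closedBall hr x)
    calc ‖u (ballFold c r x)‖ₑ ≤ ‖u c‖ₑ + edist (u (ballFold c r x)) (u c) := by
          simpa [edist_eq_enorm_sub] using enorm_add_le (u c) (u (ballFold c r x) - u c)
      _ ≤ ‖u c‖ₑ + K * ENNReal.ofReal r := by gcongr; exact (hu _ _).trans (by gcongr)
  intro x y
  calc edist (ballExtension u c r x) (ballExtension u c r y)
      ≤ ‖radialCutoff c r x‖ₑ * edist (u (ballFold c r x)) (u (ballFold c r y)) +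
        edist (radialCutoff c r x) (radialCutoff c r y) * ‖u (ballFold c r y)‖ₑ :=
        edist_mul_mul_le_enorm_mul_add _ _ _ _
    _ ≤ 1 * (K * edist x y) +
        r⁻¹.toNNReal * edist x y * (‖u c‖ₑ + K * ENNReal.ofReal r) := by
        gcongr
        · exact enorm_radialCutoff_le_one c r x
        · simpa using hu.comp (lipschitzWith_ballFold (c := c) hr) x y
        · exact lipschitzWith_radialCutoff c hr x y
        · exact hbound y
    _ = _ := by
        simp only [ENNReal.coe_add, ENNReal.coe_mul, ENNReal.ofReal, enorm_eq_nnnorm]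
        ring

theorem slopeLE_ballExtension (hr : 0 < r) (ha : ∀ x, SlopeLE u x (a x)) (x : E) :
    SlopeLE (ballExtension u c r) x (ballExtensionSlope u a c r x) := by
  by_cases hx : x ∈ closedBall c (2 * r)
  · rw [ballExtensionSlope, indicator_of_mem hx]
    exact ((ha _).comp_lipschitz (lipschitzWith_ballFold hr)).mul_lipschitz
      (lipschitzWith_radialCutoff c hr) (enorm_radialCutoff_le_one c r)
  · refine .of_eventuallyEq_const (y₀ := 0) ?_ _
    filter_upwards [isClosed_closedBall.isOpen_compl.mem_nhds hx] with y hy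
    exact ballExtension_of_notMem hr fun h => hy (ball_subset_closedBall h)

theorem isLipschitzTest_ballExtension [FiniteDimensional ℝ E] (hr : 0 < r) {K : ℝ≥0}
    (hu : LipschitzWith K u) (ha : ∀ x, SlopeLE u x (a x)) :
    IsLipschitzTest (ballExtension u c r) (ballExtensionSlope u a c r) where
  lipschitz := ⟨_, lipschitzWith_ballExtension hr hu⟩
  hasCompactSupport := .intro (isCompact_closedBall c (2 * r)) fun _ hx =>
    ballExtension_of_notMem hr fun h => hx (ball_subset_closedBall h)
  slopeLE := slopeLE_ballExtension hr ha

variable [MeasurableSpace E] [BorelSpace E]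

theorem measurable_ballExtensionSlope (hr : 0 < r) (hu : Measurable u) (ha : Measurable a) :
    Measurable (ballExtensionSlope u a c r) := by
  have hfold : Measurable (ballFold c r) := (lipschitzWith_ballFold hr).continuous.measurable
  exact ((ha.comp hfold).add ((hu.comp hfold).enorm.const_mul _)).indicator
    measurableSet_closedBall

theorem lintegral_ballExtensionSlope_rpow_le [FiniteDimensional ℝ E] {p : ℝ} (hp : 1 ≤ p)
    (hr : 0 < r) (hu : Measurable u) (ha : Measurable a) :
    ∫⁻ x, ballExtensionSlope u a c r x ^ p ≤
      2 ^ p * (1 + 4 ^ Module.finrank ℝ E) * ((∫⁻ x in closedBall c r, a x ^ p) +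
        ENNReal.ofReal r⁻¹ ^ p * ∫⁻ x in closedBall c r, ‖u x‖ₑ ^ p) := by
  have hp₀ : 0 < p := by linarith
  set Ψ : E → ℝ≥0∞ := fun x => 2 ^ p * (a x ^ p + ENNReal.ofReal r⁻¹ ^ p * ‖u x‖ₑ ^ p)
  have hpointwise : ∀ x, ballExtensionSlope u a c r x ^ p ≤
      (closedBall c (2 * r)).indicator (fun x => Ψ (ballFold c r x)) x := fun x => by
    by_cases hx : x ∈ closedBall c (2 * r)
    · rw [ballExtensionSlope, indicator_of_mem hx, indicator_of_mem hx]
      refine (add_rpow_le_two_rpow_mul hp _ _).trans_eq ?_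
      rw [ENNReal.mul_rpow_of_nonneg _ _ hp₀.le]
    · rw [ballExtensionSlope, indicator_of_notMem hx, indicator_of_notMem hx,
        ENNReal.zero_rpow_of_pos hp₀]
  calc ∫⁻ x, ballExtensionSlope u a c r x ^ p
      ≤ ∫⁻ x in closedBall c (2 * r), Ψ (ballFold c r x) := by
        rw [← lintegral_indicator measurableSet_closedBall]
        exact lintegral_mono hpointwise
    _ ≤ (1 + 4 ^ Module.finrank ℝ E) * ∫⁻ x in closedBall c r, Ψ x :=
        lintegral_comp_ballFold_le hr (by fun_prop)
    _ = _ := by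
        rw [lintegral_const_mul _ (by fun_prop), lintegral_add_left (by fun_prop),
          lintegral_const_mul _ (by fun_prop)]
        ring

end Extension

section Deficit

variable {X F : Type*} [NormedAddCommGroup F] {l : ℝ≥0}

/-- The amount `(l - ‖G‖)₊` by which `‖G‖` stays below the level `l`. -/
noncomputable def normDeficit (G : X → F) (l : ℝ≥0) (x : X) : ℝ := max 0 (l - ‖G x‖)

theorem enorm_normDeficit (G : X → F) (l : ℝ≥0) (x : X) : ‖normDeficit G l x‖ₑ = l - ‖G x‖ₑ := by
  rw [normDeficit, Real.enorm_eq_ofReal (le_max_left _ _), ENNReal.ofReal_max,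
    ENNReal.ofReal_zero, max_eq_right zero_le, ENNReal.ofReal_sub _ (norm_nonneg _),
    ENNReal.ofReal_coe_nnreal, ofReal_norm]

theorem lipschitzWith_max_zero_sub_norm (l : ℝ≥0) :
    LipschitzWith 1 fun v : F => max 0 (l - ‖v‖) := by
  refine LipschitzWith.const_max (LipschitzWith.mk_one fun v w => ?_) 0
  rw [dist_sub_left, dist_eq_norm v w]
  exact dist_norm_norm_le v w

theorem continuous_normDeficit [TopologicalSpace X] {G : X → F} (hG : Continuous G) (l : ℝ≥0) :
    Continuous (normDeficit G l) :=
  (lipschitzWith_max_zero_sub_norm l).continuous.comp hG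

variable {E : Type*} [NormedAddCommGroup E] [InnerProductSpace ℝ E] [FiniteDimensional ℝ E]
  [NormedSpace ℝ F] {G : E → F} {c : E} {r p : ℝ}

theorem isLipschitzTest_ballExtension_normDeficit {K : ℝ≥0} (hK : LipschitzWith K G)
    (hG : Differentiable ℝ G) (hr : 0 < r) :
    IsLipschitzTest (ballExtension (normDeficit G l) c r)
      (ballExtensionSlope (normDeficit G l) (fun x => ‖fderiv ℝ G x‖ₑ) c r) :=
  isLipschitzTest_ballExtension hr ((lipschitzWith_max_zero_sub_norm l).comp hK) fun x =>
    .lipschitz_comp (u := G) (lipschitzWith_max_zero_sub_norm l)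
      (.of_hasFDerivAt (hG x).hasFDerivAt)

variable [MeasurableSpace E] [BorelSpace E] [CompleteSpace F]

theorem setLIntegral_enorm_normDeficit_rpow_le (hG : ContDiff ℝ 1 G) (hp : 1 ≤ p) (hr : 0 < r)
    (hl : l ≤ ⨍⁻ x in closedBall c r, ‖G x‖ₑ ∂volume) :
    ∫⁻ x in closedBall c r, ‖normDeficit G l x‖ₑ ^ p ≤
      2 ^ Module.finrank ℝ E * ENNReal.ofReal (2 * r) ^ p *
        ∫⁻ x in closedBall c r, ‖fderiv ℝ G x‖ₑ ^ p := by
  have h₀ : volume (closedBall c r) ≠ 0 := (measure_closedBall_pos volume c hr).ne'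
  have htop : volume (closedBall c r) ≠ ∞ := measure_closedBall_lt_top.ne
  calc ∫⁻ x in closedBall c r, ‖normDeficit G l x‖ₑ ^ p
      ≤ ∫⁻ x in closedBall c r, (⨍⁻ y in closedBall c r, ‖G y - G x‖ₑ ∂volume) ^ p := by
        gcongr with x
        rw [enorm_normDeficit]
        exact sub_enorm_le_laverage_enorm_sub h₀ htop hl x
    _ ≤ 2 ^ Module.finrank ℝ E * ediam (closedBall c r) ^ p *
        ∫⁻ x in closedBall c r, ‖fderiv ℝ G x‖ₑ ^ p :=
        lintegral_laverage_enorm_sub_rpow_le hG hp (convex_closedBall c r)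
          measurableSet_closedBall h₀ htop
    _ ≤ _ := by
        gcongr
        rw [ENNReal.ofReal_mul zero_le_two, ENNReal.ofReal_ofNat, ← closedEBall_ofReal hr.le]
        exact ediam_closedEBall_le

/-- The constant in the energy estimate for the extended deficit, in dimension `n`. -/
noncomputable def deficitConst (n : ℕ) (p : ℝ) : ℝ≥0∞ :=
  2 ^ p * (1 + 4 ^ n) * (1 + 2 ^ n * 2 ^ p)

theorem deficitConst_ne_top (n : ℕ) (hp : 0 ≤ p) : deficitConst n p ≠ ∞ := by
  have : (2 : ℝ≥0∞) ^ p ≠ ∞ := ENNReal.rpow_ne_top_of_nonneg hp (by simp)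
  unfold deficitConst
  finiteness

theorem lintegral_ballExtensionSlope_normDeficit_rpow_le (hG : ContDiff ℝ 1 G) (hp : 1 ≤ p)
    (hr : 0 < r) (hl : l ≤ ⨍⁻ x in closedBall c r, ‖G x‖ₑ ∂volume) :
    ∫⁻ x, ballExtensionSlope (normDeficit G l) (fun x => ‖fderiv ℝ G x‖ₑ) c r x ^ p ≤
      deficitConst (Module.finrank ℝ E) p * ∫⁻ x in closedBall c r, ‖fderiv ℝ G x‖ₑ ^ p := by
  have hcancel : ENNReal.ofReal r⁻¹ ^ p * ENNReal.ofReal (2 * r) ^ p = 2 ^ p := by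
    rw [← ENNReal.mul_rpow_of_nonneg _ _ (by linarith), ← ENNReal.ofReal_mul (by positivity),
      mul_left_comm, inv_mul_cancel₀ hr.ne', mul_one, ENNReal.ofReal_ofNat]
  refine (lintegral_ballExtensionSlope_rpow_le hp hr
    (continuous_normDeficit hG.continuous l).measurable (hG.continuous_fderiv
    one_ne_zero).enorm.measurable).trans ?_
  grw [setLIntegral_enorm_normDeficit_rpow_le hG hp hr hl, deficitConst, ← hcancel]
  exact le_of_eq (by ring)

end Deficit

/-! ### Capacity of sets where ball averages are large -/

section Covering

variable {α : Type*} [MetricSpace α] [MeasurableSpace α] [OpensMeasurableSpace α]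

theorem exists_finset_cover_sum_setLIntegral_le {N : ℕ} {τ : ℝ} (hτ : 1 < τ)
    (hN : IsEmpty (Besicovitch.SatelliteConfig α N τ)) (μ : Measure α) {S : Set α}
    (hS : IsCompact S) {ρ : α → ℝ} {R : ℝ} (hρ : ∀ x ∈ S, 0 < ρ x) (hR : ∀ x ∈ S, ρ x ≤ R) :
    ∃ t : Finset α, ↑t ⊆ S ∧ S ⊆ ⋃ x ∈ t, ball x (ρ x) ∧ ∀ Ψ : α → ℝ≥0∞,
      ∑ x ∈ t, ∫⁻ y in closedBall x (ρ x), Ψ y ∂μ ≤ N * ∫⁻ y, Ψ y ∂μ := by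
  classical
  let q : Besicovitch.BallPackage S α :=
    ⟨fun x => x, fun x => ρ x, fun x => hρ x x.2, R, fun x => hR x x.2⟩
  obtain ⟨s, hdisj, hcover⟩ := Besicovitch.exist_disjoint_covering_families hτ hN q
  have hcover' : S ⊆ ⋃ z ∈ ⋃ i, s i, ball (z : α) (ρ z) := fun x hx => by
    have := hcover (mem_range_self (⟨x, hx⟩ : S))
    simp only [mem_iUnion] at this ⊢
    obtain ⟨i, z, hz, hxz⟩ := this
    exact ⟨z, ⟨i, hz⟩, hxz⟩
  obtain ⟨t', ht's, ht'fin, ht'⟩ :=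
    hS.elim_finite_subcover_image (fun _ _ => isOpen_ball) hcover'
  obtain ⟨t, rfl⟩ := ht'fin.exists_finset_coe
  refine ⟨t.map (.subtype _), by simp, by simpa using ht', fun Ψ => ?_⟩
  rw [Finset.sum_map]
  calc ∑ z ∈ t, ∫⁻ y in closedBall (z : α) (ρ z), Ψ y ∂μ
      ≤ ∑ z ∈ t, ∑ i, if z ∈ s i then ∫⁻ y in closedBall (z : α) (ρ z), Ψ y ∂μ else 0 := by
        refine Finset.sum_le_sum fun z hz => ?_
        obtain ⟨i, hi⟩ := mem_iUnion.1 (ht's hz)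
        refine le_trans ?_ (Finset.single_le_sum (fun _ _ => zero_le) (Finset.mem_univ i))
        rw [if_pos hi]
    _ = ∑ i, ∑ z ∈ t with z ∈ s i, ∫⁻ y in closedBall (z : α) (ρ z), Ψ y ∂μ := by
        rw [Finset.sum_comm]
        simp only [Finset.sum_filter]
    _ ≤ ∑ _i : Fin N, ∫⁻ y, Ψ y ∂μ := by
        gcongr with i
        rw [← lintegral_biUnion_finset ?_ fun _ _ => measurableSet_closedBall]
        · exact setLIntegral_le_lintegral _ _
        · exact (hdisj i).subset fun z hz => (Finset.mem_filter.1 hz).2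
    _ = N * ∫⁻ y, Ψ y ∂μ := by simp

end Covering

section Smooth

variable {n : ℕ} {F : Type*} [NormedAddCommGroup F] [NormedSpace ℝ F] {G : En n → F} {p : ℝ}

theorem isLipschitzTest_norm (hG : ContDiff ℝ 1 G) (hGc : HasCompactSupport G) :
    IsLipschitzTest (fun x => ‖G x‖) fun x => ‖fderiv ℝ G x‖ₑ where
  lipschitz :=
    let ⟨_, hK⟩ := hG.lipschitzWith_of_hasCompactSupport hGc one_ne_zero
    ⟨_, lipschitzWith_one_norm.comp hK⟩
  hasCompactSupport := hGc.norm
  slopeLE x := .lipschitz_comp (u := G) lipschitzWith_one_norm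
    (.of_hasFDerivAt (hG.differentiable one_ne_zero x).hasFDerivAt)

/-- The constant in the capacity estimate for compactly supported `C¹` functions. -/
noncomputable def coveringConst (n : ℕ) (p : ℝ) : ℝ≥0∞ :=
  2 ^ p * (1 + Besicovitch.multiplicity (En n) * deficitConst n p)

theorem coveringConst_ne_top (n : ℕ) (hp : 0 ≤ p) : coveringConst n p ≠ ∞ := by
  have := deficitConst_ne_top n hp
  have : (2 : ℝ≥0∞) ^ p ≠ ∞ := ENNReal.rpow_ne_top_of_nonneg hp (by simp)
  unfold coveringConst
  finiteness

theorem lintegral_add_finset_sup_rpow_le {α ι : Type*} [MeasurableSpace α] {μ : Measure α}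
    (hp : 1 ≤ p) (t : Finset ι) {a : α → ℝ≥0∞} {A : ι → α → ℝ≥0∞} (ha : Measurable a)
    (hA : ∀ i ∈ t, Measurable (A i)) :
    ∫⁻ x, (a x + t.sup fun i => A i x) ^ p ∂μ ≤
      2 ^ p * ((∫⁻ x, a x ^ p ∂μ) + ∑ i ∈ t, ∫⁻ x, A i x ^ p ∂μ) := by
  have hp₀ : 0 < p := by linarith
  calc ∫⁻ x, (a x + t.sup fun i => A i x) ^ p ∂μ
      ≤ ∫⁻ x, 2 ^ p * (a x ^ p + ∑ i ∈ t, A i x ^ p) ∂μ := by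
        gcongr with x
        grw [add_rpow_le_two_rpow_mul hp, finset_sup_rpow_le_sum_rpow t _ hp₀]
    _ = _ := by
        rw [lintegral_const_mul' _ _ (ENNReal.rpow_ne_top_of_nonneg hp₀.le (by simp)),
          lintegral_add_left (ha.pow_const p),
          lintegral_finsetSum t fun i hi => (hA i hi).pow_const p]

theorem capK_le_of_forall_le_laverage [CompleteSpace F] (hp : 1 ≤ p) (hG : ContDiff ℝ 1 G)
    (hGc : HasCompactSupport G) {S : Set (En n)} (hS : IsCompact S) {l : ℝ≥0} (hl : l ≠ 0) {R : ℝ}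
    (hSR : ∀ x ∈ S, ∃ r, 0 < r ∧ r ≤ R ∧ l ≤ ⨍⁻ y in closedBall x r, ‖G y‖ₑ ∂volume) :
    capK p S ≤ (2 / l) ^ p * (coveringConst n p * ∫⁻ x, ‖fderiv ℝ G x‖ₑ ^ p) := by
  choose! ρ hρ hρR hρl using hSR
  obtain ⟨K, hK⟩ := hG.lipschitzWith_of_hasCompactSupport hGc one_ne_zero
  obtain ⟨t, htS, hcover, hsum⟩ := exists_finset_cover_sum_setLIntegral_le
    (Besicovitch.one_lt_goodτ (En n)) (Besicovitch.isEmpty_satelliteConfig_multiplicity (En n))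
    volume hS hρ hρR
  set A : En n → En n → ℝ≥0∞ := fun x =>
    ballExtensionSlope (normDeficit G l) (fun y => ‖fderiv ℝ G y‖ₑ) x (ρ x)
  have hderiv : Measurable fun y => ‖fderiv ℝ G y‖ₑ :=
    (hG.continuous_fderiv one_ne_zero).enorm.measurable
  obtain ⟨H, hH, hHge⟩ := IsLipschitzTest.exists_finset_sup t (A := A) fun x hx =>
    isLipschitzTest_ballExtension_normDeficit (l := l) hK (hG.differentiable one_ne_zero)
      (hρ x (htS hx))
  have hbelow : ∀ x ∈ S, l ≤ ‖G x‖ + H x := fun x hx => by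
    obtain ⟨z, hz, hxz⟩ := mem_iUnion₂.1 (hcover hx)
    have hle := hHge z hz x
    rw [ballExtension_of_mem (hρ z (htS hz)) (ball_subset_closedBall hxz)] at hle
    have hdef : l - ‖G x‖ ≤ normDeficit G l x := le_max_right _ _
    linarith
  refine (((isLipschitzTest_norm hG hGc).add hH).capK_le hp hl hbelow).trans ?_
  gcongr (2 / (l : ℝ≥0∞)) ^ p * ?_
  calc ∫⁻ x, (‖fderiv ℝ G x‖ₑ + t.sup fun z => A z x) ^ p
      ≤ 2 ^ p * ((∫⁻ x, ‖fderiv ℝ G x‖ₑ ^ p) + ∑ z ∈ t, ∫⁻ x, A z x ^ p) :=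
        lintegral_add_finset_sup_rpow_le hp t hderiv fun z hz => measurable_ballExtensionSlope
          (hρ z (htS hz)) (continuous_normDeficit hG.continuous l).measurable hderiv
    _ ≤ 2 ^ p * ((∫⁻ x, ‖fderiv ℝ G x‖ₑ ^ p) + ∑ z ∈ t,
        deficitConst n p * ∫⁻ x in closedBall z (ρ z), ‖fderiv ℝ G x‖ₑ ^ p) := by
        gcongr with z hz
        simpa using lintegral_ballExtensionSlope_normDeficit_rpow_le hG hp (hρ z (htS hz))
          (hρl z (htS hz))
    _ ≤ 2 ^ p * ((∫⁻ x, ‖fderiv ℝ G x‖ₑ ^ p) +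
        deficitConst n p * (Besicovitch.multiplicity (En n) * ∫⁻ x, ‖fderiv ℝ G x‖ₑ ^ p)) := by
        rw [← Finset.mul_sum]
        gcongr
        exact hsum _
    _ = coveringConst n p * ∫⁻ x, ‖fderiv ℝ G x‖ₑ ^ p := by
        rw [coveringConst]
        ring

end Smooth

/-! ### Mollification of weakly differentiable functions -/

section Coordinates

variable {n : ℕ}

theorem enorm_clm_le_sum_enorm_apply_single {F : Type*} [NormedAddCommGroup F] [NormedSpace ℝ F]
    (L : En n →L[ℝ] F) : ‖L‖ₑ ≤ ∑ j, ‖L (EuclideanSpace.single j 1)‖ₑ := by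
  simp only [enorm_eq_nnnorm, ← ENNReal.ofNNReal_finsetSum, ENNReal.coe_le_coe]
  refine L.opNNNorm_le_bound _ fun v => ?_
  calc ‖L v‖₊ = ‖∑ j, v j • L (EuclideanSpace.single j 1)‖₊ := by
        conv_lhs => rw [← (EuclideanSpace.basisFun (Fin n) ℝ).sum_repr v]
        simp
    _ ≤ ∑ j, ‖v j‖₊ * ‖L (EuclideanSpace.single j 1)‖₊ := by
        refine (nnnorm_sum_le _ _).trans_eq ?_
        simp only [nnnorm_smul]
    _ ≤ (∑ j, ‖L (EuclideanSpace.single j 1)‖₊) * ‖v‖₊ := by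
        rw [Finset.sum_mul]
        refine Finset.sum_le_sum fun j _ => ?_
        rw [mul_comm]
        gcongr
        exact PiLp.nnnorm_apply_le v j

theorem enorm_euclidean_le_sum_enorm_apply (y : En n) : ‖y‖ₑ ≤ ∑ i, ‖y i‖ₑ := by
  calc ‖y‖ₑ = ‖∑ i, y i • EuclideanSpace.single i (1 : ℝ)‖ₑ := by
        conv_lhs => rw [← (EuclideanSpace.basisFun (Fin n) ℝ).sum_repr y]
        simp
    _ ≤ ∑ i, ‖y i‖ₑ := (enorm_sum_le _ _).trans_eq <| by
        simp [enorm_smul, enorm_eq_nnnorm (EuclideanSpace.single _ _)]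

theorem enorm_euclidean_apply_le (y : En n) (i : Fin n) : ‖y i‖ₑ ≤ ‖y‖ₑ :=
  ENNReal.coe_le_coe.2 (PiLp.nnnorm_apply_le y i)

end Coordinates

section WeakDerivative

variable {n : ℕ}

theorem fderiv_comp_const_sub_apply {E F : Type*} [NormedAddCommGroup E] [NormedSpace ℝ E]
    [NormedAddCommGroup F] [NormedSpace ℝ F] {ψ : E → F} (hψ : Differentiable ℝ ψ) (x y v : E) :
    fderiv ℝ (fun y => ψ (x - y)) y v = -fderiv ℝ ψ (x - y) v := by
  have hderiv := (hψ (x - y)).hasFDerivAt.comp y ((hasFDerivAt_id y).const_sub x)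
  exact (DFunLike.congr_fun hderiv.fderiv v).trans (by simp)

variable (φ : ContDiffBump (0 : En n))

theorem isTest_normed_sub (x : En n) : IsTest univ fun y => φ.normed volume (x - y) :=
  ⟨φ.contDiff_normed.comp (contDiff_const.sub contDiff_id),
    φ.hasCompactSupport_normed.comp_homeomorph (Homeomorph.subLeft x), subset_univ _⟩

theorem fderiv_mollify_apply_eq_integral {f : En n → ℝ} (hf : LocallyIntegrable f) (x v : En n) :
    fderiv ℝ (mollify φ f) x v = ∫ y, f y * fderiv ℝ (φ.normed volume) (x - y) v := by
  have hφ : ContDiff ℝ 1 (φ.normed (volume : Measure (En n))) := φ.contDiff_normed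
  have hφc := φ.hasCompactSupport_normed (μ := (volume : Measure (En n)))
  have hint := (hφc.fderiv (𝕜 := ℝ)).convolutionExists_left
    ((ContinuousLinearMap.lsmul ℝ ℝ : ℝ →L[ℝ] ℝ →L[ℝ] ℝ).precompL (En n))
    (hφ.continuous_fderiv one_ne_zero) hf x
  have hderiv : HasFDerivAt (mollify φ f) _ x := hφc.hasFDerivAt_convolution_left _ hφ hf x
  rw [hderiv.fderiv, convolution_def, ContinuousLinearMap.integral_apply hint,
    ← integral_sub_left_eq_self _ volume x]
  simp [mul_comm]

theorem fderiv_mollify_apply_of_hasWeakPartialOn {f g : En n → ℝ} {v : En n}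
    (hf : LocallyIntegrable f) (hg : HasWeakPartialOn univ f g v) (x : En n) :
    fderiv ℝ (mollify φ f) x v = mollify φ g x := by
  have hweak := hg _ (isTest_normed_sub φ x)
  have hφ : Differentiable ℝ (φ.normed (volume : Measure (En n))) :=
    (φ.contDiff_normed (n := 1)).differentiable one_ne_zero
  simp only [fderiv_comp_const_sub_apply hφ, mul_neg, integral_neg, neg_inj] at hweak
  rw [fderiv_mollify_apply_eq_integral φ hf, hweak, mollify_apply,
    ← integral_sub_left_eq_self _ volume x]
  simp [mul_comm]

theorem enorm_fderiv_mollify_le {f : En n → ℝ} {g : En n → En n} (hf : LocallyIntegrable f)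
    (hg : HasWeakGradientOn univ f g) (x : En n) :
    ‖fderiv ℝ (mollify φ f) x‖ₑ ≤ n * (bumpDensity φ ⋆ₗ[volume] fun y => ‖g y‖ₑ) x := by
  calc ‖fderiv ℝ (mollify φ f) x‖ₑ
      ≤ ∑ i, ‖fderiv ℝ (mollify φ f) x (EuclideanSpace.single i 1)‖ₑ :=
        enorm_clm_le_sum_enorm_apply_single _
    _ ≤ ∑ _i : Fin n, (bumpDensity φ ⋆ₗ[volume] fun y => ‖g y‖ₑ) x := by
        gcongr with i
        rw [fderiv_mollify_apply_of_hasWeakPartialOn φ hf (hg i)]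
        refine (enorm_mollify_le φ _ x).trans (lintegral_mono fun y => ?_)
        gcongr
        exact enorm_euclidean_apply_le _ i
    _ = n * (bumpDensity φ ⋆ₗ[volume] fun y => ‖g y‖ₑ) x := by simp

theorem mollify_apply_coord {g : En n → En n} (hg : LocallyIntegrable g) (i : Fin n) (x : En n) :
    mollify φ g x i = mollify φ (fun y => g y i) x :=
  ((EuclideanSpace.proj (𝕜 := ℝ) i).integral_comp_comm
    (φ.hasCompactSupport_normed.convolutionExists_left _ φ.continuous_normed hg x)).symm.trans
    (by simp [mollify_apply])

theorem fderiv_mollify_apply_coord {g : En n → En n} (hg : LocallyIntegrable g) (i : Fin n)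
    (x v : En n) :
    fderiv ℝ (mollify φ g) x v i = fderiv ℝ (mollify φ fun y => g y i) x v := by
  have hdiff := (contDiff_mollify φ hg).differentiable (by simp) x
  have hcoord := (EuclideanSpace.proj (𝕜 := ℝ) i).hasFDerivAt.comp x hdiff.hasFDerivAt
  rw [← funext (mollify_apply_coord φ hg i)]
  exact DFunLike.congr_fun hcoord.fderiv.symm v

theorem enorm_fderiv_mollify_le_of_forall_coord {g : En n → En n} {h : En n → Fin n → En n}
    (hg : LocallyIntegrable g)
    (hh : ∀ i, HasWeakGradientOn univ (fun x => g x i) fun x => h x i) (x : En n) :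
    ‖fderiv ℝ (mollify φ g) x‖ₑ
      ≤ n * (n * (bumpDensity φ ⋆ₗ[volume] fun y => ∑ i, ‖h y i‖ₑ) x) := by
  have hgi : ∀ i, LocallyIntegrable fun y => g y i := fun i y =>
    (hg y).imp fun _ hs => ⟨hs.1, (EuclideanSpace.proj (𝕜 := ℝ) i).integrable_comp hs.2⟩
  have hij : ∀ i j, ‖fderiv ℝ (mollify φ g) x (EuclideanSpace.single j 1) i‖ₑ
      ≤ (bumpDensity φ ⋆ₗ[volume] fun y => ∑ i, ‖h y i‖ₑ) x := fun i j => by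
    rw [fderiv_mollify_apply_coord φ hg,
      fderiv_mollify_apply_of_hasWeakPartialOn φ (hgi i) (hh i j)]
    refine (enorm_mollify_le φ _ x).trans (lintegral_mono fun y => ?_)
    gcongr
    exact (enorm_euclidean_apply_le _ j).trans
      (Finset.single_le_sum_of_canonicallyOrdered (f := fun i => ‖h (-y + x) i‖ₑ)
        (Finset.mem_univ i))
  calc ‖fderiv ℝ (mollify φ g) x‖ₑ
      ≤ ∑ j, ∑ i, ‖fderiv ℝ (mollify φ g) x (EuclideanSpace.single j 1) i‖ₑ := by
        refine (enorm_clm_le_sum_enorm_apply_single _).trans ?_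
        gcongr with j
        exact enorm_euclidean_le_sum_enorm_apply _
    _ ≤ ∑ _j : Fin n, ∑ _i : Fin n, (bumpDensity φ ⋆ₗ[volume] fun y => ∑ i, ‖h y i‖ₑ) x := by
        gcongr with j _ i
        exact hij i j
    _ = n * (n * (bumpDensity φ ⋆ₗ[volume] fun y => ∑ i, ‖h y i‖ₑ) x) := by simp

end WeakDerivative

section Approximation

variable {E : Type*} [NormedAddCommGroup E]

/-- Bump functions at the origin whose supports shrink to a point. The ratio of their radii is
constant, so that mollification by them converges almost everywhere. -/
noncomputable def shrinkingBump (k : ℕ) : ContDiffBump (0 : E) where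
  rIn := 1 / (k + 1)
  rOut := 2 / (k + 1)
  rIn_pos := by positivity
  rIn_lt_rOut := by gcongr; norm_num

variable (E) in
theorem tendsto_rOut_shrinkingBump :
    Tendsto (fun k => (shrinkingBump k : ContDiffBump (0 : E)).rOut) atTop (𝓝 0) := by
  simpa [shrinkingBump, div_eq_mul_inv] using
    (tendsto_one_div_add_atTop_nhds_zero_nat (𝕜 := ℝ)).const_mul 2

variable [NormedSpace ℝ E] [HasContDiffBump E] [MeasureSpace E] [BorelSpace E]
  [FiniteDimensional ℝ E] [(volume : Measure E).IsAddHaarMeasure]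
  {F : Type*} [NormedAddCommGroup F] [NormedSpace ℝ F] {f : E → F}

theorem ae_tendsto_mollify_shrinkingBump [CompleteSpace F] (hf : LocallyIntegrable f) :
    ∀ᵐ x, Tendsto (fun k => mollify (shrinkingBump k) f x) atTop (𝓝 (f x)) :=
  ContDiffBump.ae_convolution_tendsto_right_of_locallyIntegrable (K := 2)
    (tendsto_rOut_shrinkingBump E)
    (.of_forall fun k => le_of_eq (by simp only [shrinkingBump]; ring)) hf

theorem eventually_lt_setLIntegral_enorm_mollify [CompleteSpace F] (hf : LocallyIntegrable f)
    {s : Set E} {a : ℝ≥0∞} (ha : a < ∫⁻ x in s, ‖f x‖ₑ) :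
    ∀ᶠ k in atTop, a < ∫⁻ x in s, ‖mollify (shrinkingBump k) f x‖ₑ := by
  refine eventually_lt_of_lt_liminf (ha.trans_le ?_)
  calc ∫⁻ x in s, ‖f x‖ₑ
      = ∫⁻ x in s, liminf (fun k => ‖mollify (shrinkingBump k) f x‖ₑ) atTop := by
        refine lintegral_congr_ae (ae_restrict_of_ae ?_)
        filter_upwards [ae_tendsto_mollify_shrinkingBump hf] with x hx
        exact hx.enorm.liminf_eq.symm
    _ ≤ liminf (fun k => ∫⁻ x in s, ‖mollify (shrinkingBump k) f x‖ₑ) atTop :=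
        lintegral_liminf_le' fun k =>
          (contDiff_mollify _ hf).continuous.enorm.measurable.aemeasurable

end Approximation

/-! ### Superlevel sets of the maximal function -/

theorem exists_lt_setLIntegral_ball {X : Type*} [PseudoMetricSpace X] [MeasurableSpace X]
    [OpensMeasurableSpace X] {μ : Measure X} {ψ : X → ℝ≥0∞} {x : X} {r : ℝ} {a : ℝ≥0∞}
    (ha : a < ∫⁻ y in ball x r, ψ y ∂μ) : ∃ s < r, a < ∫⁻ y in ball x s, ψ y ∂μ := by
  obtain ⟨u, hu, hur, hlim⟩ := exists_seq_strictMono_tendsto r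
  have hUnion : ⋃ k, ball x (u k) = ball x r := by
    refine (iUnion_subset fun k => ball_subset_ball (hur k).le).antisymm fun y hy => ?_
    exact mem_iUnion.2 (hlim.eventually_const_lt (mem_ball.1 hy)).exists
  have hmeas : Tendsto (fun k => ∫⁻ y in ball x (u k), ψ y ∂μ) atTop
      (𝓝 (∫⁻ y in ball x r, ψ y ∂μ)) := by
    simpa only [withDensity_apply _ measurableSet_ball, Function.comp_def, hUnion] using
      tendsto_measure_iUnion_atTop (μ := μ.withDensity ψ) fun i j hij =>
        ball_subset_ball (x := x) (hu.monotone hij)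
  obtain ⟨k, hk⟩ := (hmeas.eventually_const_lt ha).exists
  exact ⟨u k, hur k, hk⟩

section MaximalSuperlevel

variable {E F : Type*} [NormedAddCommGroup E] [NormedSpace ℝ E] [MeasureSpace E]
  [FiniteDimensional ℝ E] [NormedAddCommGroup F]
  {g : E → F} {l : ℝ≥0∞}

/-- The set where the centered Hardy–Littlewood maximal function of `‖g‖` exceeds `l`. -/
def maximalSuperlevel (g : E → F) (l : ℝ≥0∞) : Set E :=
  {x | ∃ r, 0 < r ∧ l < ⨍⁻ y in ball x r, ‖g y‖ₑ ∂volume}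

variable [(volume : Measure E).IsAddHaarMeasure]

theorem setLIntegral_ball_le_of_notMem_maximalSuperlevel {x : E} (hx : x ∉ maximalSuperlevel g l)
    (r : ℝ) : ∫⁻ y in ball x r, ‖g y‖ₑ ≤ l * volume (ball x r) := by
  rcases le_or_gt r 0 with hr | hr
  · simp [ball_eq_empty.2 hr]
  · have havg : ⨍⁻ y in ball x r, ‖g y‖ₑ ∂volume ≤ l := not_lt.1 fun h => hx ⟨r, hr, h⟩
    rwa [setLAverage_eq, ENNReal.div_le_iff (measure_ball_pos _ _ hr).ne'
      measure_ball_lt_top.ne] at havg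

variable [BorelSpace E]

theorem exists_mul_volume_lt_of_mem_maximalSuperlevel {x : E} (hx : x ∈ maximalSuperlevel g l) :
    ∃ r s, 0 < r ∧ s < r ∧ l * volume (ball x r) < ∫⁻ y in ball x s, ‖g y‖ₑ := by
  obtain ⟨r, hr, hl⟩ := hx
  rw [setLAverage_eq, ENNReal.lt_div_iff_mul_lt (.inl (measure_ball_pos _ _ hr).ne')
    (.inl measure_ball_lt_top.ne)] at hl
  obtain ⟨s, hsr, hs⟩ := exists_lt_setLIntegral_ball hl
  exact ⟨r, s, hr, hsr, hs⟩

theorem isOpen_maximalSuperlevel (g : E → F) (l : ℝ≥0∞) : IsOpen (maximalSuperlevel g l) := by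
  refine Metric.isOpen_iff.2 fun x hx => ?_
  obtain ⟨r, s, hr, hsr, hlt⟩ := exists_mul_volume_lt_of_mem_maximalSuperlevel hx
  refine ⟨r - s, sub_pos.2 hsr, fun y hy => ⟨r, hr, ?_⟩⟩
  rw [setLAverage_eq, ENNReal.lt_div_iff_mul_lt (.inl (measure_ball_pos _ _ hr).ne')
    (.inl measure_ball_lt_top.ne), Measure.addHaar_ball_center]
  rw [Measure.addHaar_ball_center] at hlt
  refine hlt.trans_le (lintegral_mono_set (ball_subset_ball' ?_))
  linarith [mem_ball'.1 hy]

theorem exists_forall_le_laverage_mollify [HasContDiffBump E] [NormedSpace ℝ F] [CompleteSpace F]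
    (hg : LocallyIntegrable g) {S : Set E} (hS : IsCompact S) (hSl : S ⊆ maximalSuperlevel g l) :
    ∃ k R, ∀ x ∈ S, ∃ r, 0 < r ∧ r ≤ R ∧
      l ≤ ⨍⁻ y in closedBall x r, ‖mollify (shrinkingBump k) g y‖ₑ ∂volume := by
  choose! r s hr hsr hlt using fun x (hx : x ∈ S) =>
    exists_mul_volume_lt_of_mem_maximalSuperlevel (hSl hx)
  obtain ⟨t, htS, hcover⟩ := hS.elim_nhds_subcover (fun x => ball x (r x - s x))
    fun x hx => ball_mem_nhds x (sub_pos.2 (hsr x hx))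
  obtain ⟨k, hk⟩ := (t.eventually_all.2 fun z hz =>
    eventually_lt_setLIntegral_enorm_mollify hg (hlt z (htS z hz))).exists
  obtain ⟨R, hR⟩ := (t.image r).bddAbove
  refine ⟨k, R, fun x hx => ?_⟩
  obtain ⟨z, hz, hxz⟩ := mem_iUnion₂.1 (hcover hx)
  have hrz := hr z (htS z hz)
  refine ⟨r z, hrz, hR (Finset.mem_image_of_mem r hz), ?_⟩
  rw [setLAverage_eq, ENNReal.le_div_iff_mul_le (.inl (measure_closedBall_pos _ _ hrz).ne')
    (.inl measure_closedBall_lt_top.ne), Measure.addHaar_closedBall _ _ hrz.le,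
    ← Measure.addHaar_ball_of_pos _ z hrz]
  refine (hk z hz).le.trans (lintegral_mono_set ?_)
  refine ball_subset_closedBall.trans (closedBall_subset_closedBall' ?_)
  linarith [mem_ball'.1 hxz]

end MaximalSuperlevel

section Cutoff

variable {E F : Type*} [NormedAddCommGroup E] [NormedSpace ℝ E] [NormedAddCommGroup F]
  [NormedSpace ℝ F]

theorem exists_contDiff_cutoff [FiniteDimensional ℝ E] {s : Set E} (hs : Bornology.IsBounded s) :
    ∃ χ : E → ℝ, ContDiff ℝ (⊤ : ℕ∞) χ ∧ HasCompactSupport χ ∧ (∀ x ∈ s, χ x = 1) ∧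
      (∀ x, ‖χ x‖ₑ ≤ 1) ∧ ∀ x, ‖fderiv ℝ χ x‖ₑ ≤ 1 := by
  let ψ : ContDiffBump (0 : E) := ⟨1, 2, one_pos, one_lt_two⟩
  obtain ⟨M, hM⟩ := (ψ.contDiff (n := 1)).lipschitzWith_of_hasCompactSupport ψ.hasCompactSupport
    one_ne_zero
  obtain ⟨R₀, hR₀⟩ := hs.subset_ball 0
  obtain ⟨R, hR, hMR, hR₀R⟩ : ∃ R : ℝ≥0, 0 < R ∧ M ≤ R ∧ R₀ ≤ R :=
    ⟨M + 1 + R₀.toNNReal, by positivity, by rw [add_assoc]; exact le_self_add,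
      (Real.le_coe_toNNReal R₀).trans (by push_cast; linarith [M.coe_nonneg])⟩
  have hR' : (0 : ℝ) < R := hR
  refine ⟨fun x => ψ ((R : ℝ)⁻¹ • x), ψ.contDiff.comp (contDiff_const_smul _),
    ψ.hasCompactSupport.comp_smul (by positivity), fun x hx => ?_, fun x => ?_, fun x => ?_⟩
  · refine ψ.one_of_mem_closedBall ?_
    rw [mem_closedBall_zero_iff, norm_smul, norm_inv, Real.norm_of_nonneg hR'.le,
      inv_mul_le_iff₀ hR']
    exact (mem_ball_zero_iff.1 (hR₀ hx)).le.trans (by simpa [ψ] using hR₀R)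
  · rw [Real.enorm_of_nonneg ψ.nonneg]
    exact ENNReal.ofReal_le_one.2 ψ.le_one
  · have hlip : LipschitzWith 1 fun x => ψ ((R : ℝ)⁻¹ • x) :=
      (hM.comp (lipschitzWith_smul (R : ℝ)⁻¹)).weaken <| by
        rw [nnnorm_inv, NNReal.nnnorm_eq]
        exact mul_inv_le_one_of_le₀ hMR zero_le
    exact ENNReal.coe_le_coe.2 (norm_fderiv_le_of_lipschitz ℝ hlip)

theorem enorm_fderiv_smul_le {χ : E → ℝ} {G : E → F} {x : E} (hχ : DifferentiableAt ℝ χ x)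
    (hG : DifferentiableAt ℝ G x) (hχ₁ : ‖χ x‖ₑ ≤ 1) (hχ₂ : ‖fderiv ℝ χ x‖ₑ ≤ 1) :
    ‖fderiv ℝ (fun y => χ y • G y) x‖ₑ ≤ ‖fderiv ℝ G x‖ₑ + ‖G x‖ₑ := by
  rw [fderiv_fun_smul hχ hG]
  refine (enorm_add_le (E := E →L[ℝ] F) _ _).trans (add_le_add ?_ ?_)
  · rw [enorm_smul]
    exact mul_le_of_le_one_left' hχ₁
  · rw [enorm_eq_nnnorm, ContinuousLinearMap.nnnorm_smulRight_apply, ENNReal.coe_mul]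
    exact mul_le_of_le_one_left' hχ₂

end Cutoff

section Capacity

variable {n : ℕ} {p : ℝ}

theorem lintegral_enorm_fderiv_mollify_rpow_le (hp : 1 ≤ p) (φ : ContDiffBump (0 : En n))
    {g : En n → En n} {h : En n → Fin n → En n} (hg : LocallyIntegrable g)
    (hh : ∀ i, HasWeakGradientOn univ (fun x => g x i) fun x => h x i)
    (hhm : ∀ i, AEMeasurable fun x => ‖h x i‖ₑ) :
    ∫⁻ x, ‖fderiv ℝ (mollify φ g) x‖ₑ ^ p ≤ (n * n : ℝ≥0∞) ^ p * ∫⁻ x, (∑ i, ‖h x i‖ₑ) ^ p := by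
  have hp₀ : 0 ≤ p := by linarith
  calc ∫⁻ x, ‖fderiv ℝ (mollify φ g) x‖ₑ ^ p
      ≤ ∫⁻ x, (n * n : ℝ≥0∞) ^ p *
          (bumpDensity φ ⋆ₗ[volume] fun y => ∑ i, ‖h y i‖ₑ) x ^ p := by
        refine lintegral_mono fun x => ?_
        rw [← ENNReal.mul_rpow_of_nonneg _ _ hp₀, mul_assoc]
        gcongr
        exact enorm_fderiv_mollify_le_of_forall_coord φ hg hh x
    _ ≤ (n * n : ℝ≥0∞) ^ p * ∫⁻ x, (∑ i, ‖h x i‖ₑ) ^ p := by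
        rw [lintegral_const_mul' _ _ (ENNReal.rpow_ne_top_of_nonneg hp₀ (by finiteness))]
        gcongr (n * n : ℝ≥0∞) ^ p * ?_
        exact lintegral_lconvolution_rpow_le hp (measurable_bumpDensity φ)
          (lintegral_bumpDensity φ) (Finset.aemeasurable_fun_sum _ fun i _ => hhm i)

/-- The `p`-th power Sobolev norm of a vector field `g` with weak derivatives `h`, up to the
dimensional constants lost in mollification. -/
noncomputable def sobolevEnergy (p : ℝ) (g : En n → En n) (h : En n → Fin n → En n) : ℝ≥0∞ :=
  2 ^ p * ((n * n : ℝ≥0∞) ^ p * (∫⁻ x, (∑ i, ‖h x i‖ₑ) ^ p) + ∫⁻ x, ‖g x‖ₑ ^ p)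

theorem lintegral_enorm_fderiv_smul_mollify_rpow_le (hp : 1 ≤ p) (φ : ContDiffBump (0 : En n))
    {g : En n → En n} {h : En n → Fin n → En n} (hg : LocallyIntegrable g)
    (hh : ∀ i, HasWeakGradientOn univ (fun x => g x i) fun x => h x i)
    (hhm : ∀ i, AEMeasurable fun x => ‖h x i‖ₑ) {χ : En n → ℝ} (hχ : Differentiable ℝ χ)
    (hχ₁ : ∀ x, ‖χ x‖ₑ ≤ 1) (hχ₂ : ∀ x, ‖fderiv ℝ χ x‖ₑ ≤ 1) :
    ∫⁻ x, ‖fderiv ℝ (fun y => χ y • mollify φ g y) x‖ₑ ^ p ≤ sobolevEnergy p g h := by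
  have hdiff : Differentiable ℝ (mollify φ g) := (contDiff_mollify φ hg).differentiable (by simp)
  calc ∫⁻ x, ‖fderiv ℝ (fun y => χ y • mollify φ g y) x‖ₑ ^ p
      ≤ ∫⁻ x, 2 ^ p * (‖fderiv ℝ (mollify φ g) x‖ₑ ^ p + ‖mollify φ g x‖ₑ ^ p) := by
        gcongr with x
        grw [← add_rpow_le_two_rpow_mul hp, enorm_fderiv_smul_le (hχ x) (hdiff x) (hχ₁ x) (hχ₂ x)]
    _ = 2 ^ p * ((∫⁻ x, ‖fderiv ℝ (mollify φ g) x‖ₑ ^ p) + ∫⁻ x, ‖mollify φ g x‖ₑ ^ p) := by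
        rw [lintegral_const_mul' _ _ (ENNReal.rpow_ne_top_of_nonneg (by linarith) (by simp)),
          lintegral_add_left ((measurable_fderiv ℝ _).enorm.pow_const p)]
    _ ≤ sobolevEnergy p g h := by
        unfold sobolevEnergy
        gcongr (2 : ℝ≥0∞) ^ p * (?_ + ?_)
        · exact lintegral_enorm_fderiv_mollify_rpow_le hp φ hg hh hhm
        · exact lintegral_enorm_mollify_rpow_le φ hg.aestronglyMeasurable hp

theorem capK_le_of_subset_maximalSuperlevel (hp : 1 ≤ p) {g : En n → En n}
    {h : En n → Fin n → En n} (hg : LocallyIntegrable g)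
    (hh : ∀ i, HasWeakGradientOn univ (fun x => g x i) fun x => h x i)
    (hhm : ∀ i, AEMeasurable fun x => ‖h x i‖ₑ) {l : ℝ≥0} (hl : l ≠ 0) {S : Set (En n)}
    (hS : IsCompact S) (hSl : S ⊆ maximalSuperlevel g l) :
    capK p S ≤ (2 / l) ^ p * (coveringConst n p * sobolevEnergy p g h) := by
  obtain ⟨k, R, hkR⟩ := exists_forall_le_laverage_mollify hg hS hSl
  obtain ⟨χ, hχ, hχc, hχone, hχ₁, hχ₂⟩ := exists_contDiff_cutoff (hS.isBounded.cthickening (δ := R))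
  have hG : ContDiff ℝ 1 fun x => χ x • mollify (shrinkingBump k) g x :=
    (hχ.smul (contDiff_mollify _ hg)).of_le (by simp)
  refine (capK_le_of_forall_le_laverage hp hG hχc.smul_right hS hl (R := R) fun x hx => ?_).trans ?_
  · obtain ⟨r, hr, hrR, hle⟩ := hkR x hx
    refine ⟨r, hr, hrR, hle.trans_eq ?_⟩
    rw [setLAverage_eq, setLAverage_eq]
    congr 1
    refine setLIntegral_congr_fun measurableSet_closedBall fun y hy => ?_
    have hy' : y ∈ cthickening R S :=
      mem_cthickening_of_dist_le y x R S hx ((mem_closedBall.1 hy).trans hrR)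
    simp only [hχone y hy', one_smul]
  · gcongr
    exact lintegral_enorm_fderiv_smul_mollify_rpow_le hp _ hg hh hhm
      (hχ.differentiable (by simp)) hχ₁ hχ₂

theorem cap_maximalSuperlevel_le (hp : 1 ≤ p) {g : En n → En n} {h : En n → Fin n → En n}
    (hg : LocallyIntegrable g)
    (hh : ∀ i, HasWeakGradientOn univ (fun x => g x i) fun x => h x i)
    (hhm : ∀ i, AEMeasurable fun x => ‖h x i‖ₑ) {l : ℝ≥0} (hl : l ≠ 0) :
    cap p (maximalSuperlevel g l) ≤ (2 / l) ^ p * (coveringConst n p * sobolevEnergy p g h) :=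
  (iInf₂_le _ ⟨Subset.rfl, isOpen_maximalSuperlevel g l⟩).trans <|
    iSup₂_le fun _ hS => capK_le_of_subset_maximalSuperlevel hp hg hh hhm hl hS.2 hS.1

end Capacity

/-! ### Ball averages -/

theorem enorm_sub_le_mul_lintegral_enorm_fderiv_dilate {E F : Type*}
    [NormedAddCommGroup E] [NormedSpace ℝ E] [NormedAddCommGroup F] [NormedSpace ℝ F]
    [CompleteSpace F] {G : E → F} (hG : ContDiff ℝ 1 G) (x y : E) (r s : ℝ) {z : E} (hz : ‖z‖ ≤ 1) :
    ‖G (y + s • z) - G (x + r • z)‖ₑ ≤ (‖y - x‖ₑ + ‖s - r‖ₑ) * ∫⁻ t in Ioc (0 : ℝ) 1,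
      ‖fderiv ℝ G (AffineMap.lineMap x y t + AffineMap.lineMap r s t • z)‖ₑ := by
  have hsegment : ∀ t : ℝ, AffineMap.lineMap (x + r • z) (y + s • z) t =
      AffineMap.lineMap x y t + AffineMap.lineMap r s t • z := fun t => by
    simp only [AffineMap.lineMap_apply_module]
    module
  have hlength : ‖y + s • z - (x + r • z)‖ₑ ≤ ‖y - x‖ₑ + ‖s - r‖ₑ := by
    rw [show y + s • z - (x + r • z) = (y - x) + (s - r) • z by module]
    grw [enorm_add_le, enorm_smul, ← ofReal_norm z, ENNReal.ofReal_le_one.2 hz, mul_one]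
  simp only [← hsegment]
  grw [enorm_sub_le_mul_lintegral_enorm_fderiv hG, hlength]

theorem setIntegral_ball_comp_sub {E F : Type*} [NormedAddCommGroup E] [MeasurableSpace E]
    [BorelSpace E] {μ : Measure E} [μ.IsAddRightInvariant] [NormedAddCommGroup F] [NormedSpace ℝ F]
    (G : E → F) (x t : E) (r : ℝ) :
    ∫ w in ball x r, G (w - t) ∂μ = ∫ w in ball (x - t) r, G w ∂μ := by
  have hpre : (fun w => w - t) ⁻¹' ball (x - t) r = ball x r := by
    ext w
    simp
  rw [← hpre]
  exact (measurePreserving_sub_right μ t).setIntegral_preimage_emb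
    (measurableEmbedding_subRight t) G _

theorem measurableEmbedding_const_add_smul {E : Type*} [NormedAddCommGroup E] [NormedSpace ℝ E]
    [MeasurableSpace E] [BorelSpace E] (x : E) {r : ℝ} (hr : r ≠ 0) :
    MeasurableEmbedding fun z : E => x + r • z :=
  (measurableEmbedding_addLeft x).comp (measurableEmbedding_const_smul₀ hr)

section AverageBall

variable {E : Type*} [NormedAddCommGroup E] [NormedSpace ℝ E] [FiniteDimensional ℝ E]
  [MeasurableSpace E] [BorelSpace E] {μ : Measure E} [μ.IsAddHaarMeasure] {r s : ℝ}

theorem map_const_add_smul_average_unitBall (x : E) (hr : 0 < r) :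
    ((μ (ball 0 1))⁻¹ • μ.restrict (ball 0 1)).map (fun z => x + r • z) =
      (μ (ball x r))⁻¹ • μ.restrict (ball x r) := by
  have hemb := measurableEmbedding_const_add_smul x hr.ne'
  have hpre : (fun z => x + r • z) ⁻¹' ball x r = ball 0 1 := by
    ext z
    simp [norm_smul, abs_of_pos hr, mul_lt_iff_lt_one_right hr]
  have hmap : μ.map (fun z => x + r • z) = ENNReal.ofReal (r ^ Module.finrank ℝ E)⁻¹ • μ := by
    rw [show (fun z => x + r • z) = (fun y => x + y) ∘ fun z => r • z from rfl,
      ← Measure.map_map (by fun_prop) (by fun_prop),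
      Measure.map_addHaar_smul μ hr.ne', Measure.map_smul, map_add_left_eq_self,
      abs_of_pos (by positivity)]
  have hpow : 0 < r ^ Module.finrank ℝ E := by positivity
  rw [Measure.map_smul, ← hpre, ← hemb.restrict_map, hmap, hpre, Measure.restrict_smul, smul_smul,
    Measure.addHaar_ball_of_pos μ x hr, ENNReal.ofReal_inv_of_pos hpow, mul_comm,
    ENNReal.mul_inv (.inl (by simpa using hpow)) (.inl ENNReal.ofReal_ne_top)]

theorem setLAverage_ball_eq_setLAverage_unitBall (Φ : E → ℝ≥0∞) (x : E) (hr : 0 < r) :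
    ⨍⁻ y in ball x r, Φ y ∂μ = ⨍⁻ z in ball 0 1, Φ (x + r • z) ∂μ := by
  rw [setLAverage_eq', setLAverage_eq', ← map_const_add_smul_average_unitBall x hr,
    (measurableEmbedding_const_add_smul x hr.ne').lintegral_map]

variable {F : Type*} [NormedAddCommGroup F] [NormedSpace ℝ F] {G : E → F}

theorem setAverage_ball_eq_setAverage_unitBall (G : E → F) (x : E) (hr : 0 < r) :
    ⨍ y in ball x r, G y ∂μ = ⨍ z in ball 0 1, G (x + r • z) ∂μ := by
  rw [setAverage_eq', setAverage_eq', ← map_const_add_smul_average_unitBall x hr,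
    (measurableEmbedding_const_add_smul x hr.ne').integral_map]

theorem enorm_setAverage_ball_sub_le [CompleteSpace F] (hG : ContDiff ℝ 1 G) {x y : E}
    (hr : 0 < r) (hs : 0 < s) {Λ : ℝ≥0∞}
    (hΛ : ∀ t ∈ Ioc (0 : ℝ) 1, ⨍⁻ w in ball (AffineMap.lineMap x y t) (AffineMap.lineMap r s t),
      ‖fderiv ℝ G w‖ₑ ∂μ ≤ Λ) :
    ‖(⨍ w in ball y s, G w ∂μ) - ⨍ w in ball x r, G w ∂μ‖ₑ ≤ (‖y - x‖ₑ + ‖s - r‖ₑ) * Λ := by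
  have hGcont : Continuous G := hG.continuous
  have hint : ∀ (a : E) (ρ : ℝ), Integrable (fun z => G (a + ρ • z))
      ((μ (ball 0 1))⁻¹ • μ.restrict (ball 0 1)) := fun a ρ => by
    refine Integrable.smul_measure ?_ (ENNReal.inv_ne_top.2 (measure_ball_pos μ _ one_pos).ne')
    exact ((Continuous.continuousOn (by fun_prop)).integrableOn_compact
      (isCompact_closedBall 0 1)).mono_set ball_subset_closedBall
  have hmeas : Measurable fun q : E × ℝ =>
      ‖fderiv ℝ G (AffineMap.lineMap x y q.2 + AffineMap.lineMap r s q.2 • q.1)‖ₑ :=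
    ((hG.continuous_fderiv one_ne_zero).comp (by fun_prop)).enorm.measurable
  calc ‖(⨍ w in ball y s, G w ∂μ) - ⨍ w in ball x r, G w ∂μ‖ₑ
      ≤ ⨍⁻ z in ball 0 1, ‖G (y + s • z) - G (x + r • z)‖ₑ ∂μ := by
        rw [setAverage_ball_eq_setAverage_unitBall G y hs,
          setAverage_ball_eq_setAverage_unitBall G x hr, setAverage_eq', setAverage_eq',
          ← integral_sub (hint y s) (hint x r), setLAverage_eq']
        exact enorm_integral_le_lintegral_enorm _
    _ ≤ ⨍⁻ z in ball 0 1, (‖y - x‖ₑ + ‖s - r‖ₑ) * (∫⁻ t in Ioc (0 : ℝ) 1,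
          ‖fderiv ℝ G (AffineMap.lineMap x y t + AffineMap.lineMap r s t • z)‖ₑ) ∂μ := by
        rw [setLAverage_eq, setLAverage_eq]
        gcongr ?_ / _
        exact setLIntegral_mono' measurableSet_ball fun z hz =>
          enorm_sub_le_mul_lintegral_enorm_fderiv_dilate hG x y r s (mem_ball_zero_iff.1 hz).le
    _ = (‖y - x‖ₑ + ‖s - r‖ₑ) * ∫⁻ t in Ioc (0 : ℝ) 1, ⨍⁻ z in ball 0 1,
          ‖fderiv ℝ G (AffineMap.lineMap x y t + AffineMap.lineMap r s t • z)‖ₑ ∂μ := by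
        simp only [setLAverage_eq']
        rw [lintegral_const_mul _ hmeas.lintegral_prod_right',
          lintegral_lintegral_swap hmeas.aemeasurable]
    _ ≤ (‖y - x‖ₑ + ‖s - r‖ₑ) * ∫⁻ _ in Ioc (0 : ℝ) 1, Λ := by
        gcongr (‖y - x‖ₑ + ‖s - r‖ₑ) * ?_
        refine setLIntegral_mono' measurableSet_Ioc fun t ht => ?_
        have hpos : 0 < AffineMap.lineMap r s t :=
          (convex_Ioi (0 : ℝ)).lineMap_mem hr hs (Ioc_subset_Icc_self ht)
        rw [← setLAverage_ball_eq_setLAverage_unitBall (fun w => ‖fderiv ℝ G w‖ₑ) _ hpos]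
        exact hΛ t ht
    _ = (‖y - x‖ₑ + ‖s - r‖ₑ) * Λ := by simp

theorem continuous_setIntegral_ball (hG : LocallyIntegrable G μ) (hr : r ≠ 0) :
    Continuous fun z => ∫ w in ball z r, G w ∂μ := by
  simp only [← integral_indicator measurableSet_ball]
  refine continuous_iff_continuousAt.2 fun z₀ => continuousAt_of_dominated
    (bound := (ball z₀ (r + 1)).indicator fun w => ‖G w‖)
    (.of_forall fun z => hG.aestronglyMeasurable.indicator measurableSet_ball) ?_ ?_ ?_
  · filter_upwards [ball_mem_nhds z₀ one_pos] with z hz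
    refine .of_forall fun w => ?_
    rw [norm_indicator_eq_indicator_norm]
    refine indicator_le_indicator_of_subset (ball_subset_ball' ?_) (fun _ => norm_nonneg _) w
    linarith [mem_ball.1 hz]
  · exact (integrable_indicator_iff measurableSet_ball).2 ((hG.integrableOn_isCompact
      (isCompact_closedBall z₀ (r + 1))).mono_set ball_subset_closedBall).norm
  · filter_upwards [measure_eq_zero_iff_ae_notMem.1 (Measure.addHaar_sphere_of_ne_zero μ z₀ hr)]
      with w hw
    have hdist : ContinuousAt (fun z => dist w z) z₀ := by fun_prop
    rcases lt_or_gt_of_ne hw with hin | hout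
    · refine continuousAt_const.congr (f := fun _ => G w) ?_
      filter_upwards [hdist.eventually_lt_const hin] with z hz
      rw [indicator_of_mem (mem_ball.2 hz)]
    · refine continuousAt_const.congr (f := fun _ => 0) ?_
      filter_upwards [hdist.eventually_const_lt hout] with z hz
      rw [indicator_of_notMem (by simpa using hz.le)]

end AverageBall

section MollifyBall

variable {E : Type*} [NormedAddCommGroup E] [NormedSpace ℝ E] [FiniteDimensional ℝ E]
  [HasContDiffBump E] [MeasureSpace E] [BorelSpace E] [(volume : Measure E).IsAddHaarMeasure]
  {F : Type*} [NormedAddCommGroup F] [NormedSpace ℝ F] {f u : E → F}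

theorem mollify_congr_of_eqOn_ball (φ : ContDiffBump (0 : E)) {x : E}
    (hfu : EqOn f u (ball x φ.rOut)) : mollify φ f x = mollify φ u x := by
  rw [mollify_apply, mollify_apply]
  congr with y
  by_cases hy : y ∈ ball 0 φ.rOut
  · rw [hfu (by simpa using hy)]
  · rw [← φ.support_normed_eq (μ := volume), Function.notMem_support] at hy
    simp [hy]

theorem setIntegral_ball_mollify_of_integrable (φ : ContDiffBump (0 : E)) (hf : Integrable f)
    (x : E) (r : ℝ) :
    ∫ w in ball x r, mollify φ f w = mollify φ (fun z => ∫ w in ball z r, f w) x := by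
  have hprod : Integrable (fun q : E × E => φ.normed volume q.2 • f (q.1 - q.2))
      ((volume.restrict (ball x r)).prod volume) :=
    (Integrable.convolution_integrand (ContinuousLinearMap.lsmul ℝ ℝ)
      (φ.integrable_normed (μ := volume)) hf).mono_measure
      (Measure.prod_mono Measure.restrict_le_self le_rfl)
  simp only [mollify_apply]
  rw [integral_integral_swap hprod]
  simp only [integral_smul, setIntegral_ball_comp_sub]

theorem setIntegral_ball_mollify (φ : ContDiffBump (0 : E)) (hf : LocallyIntegrable f)
    (x : E) (r : ℝ) :
    ∫ w in ball x r, mollify φ f w = mollify φ (fun z => ∫ w in ball z r, f w) x := by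
  set u := (ball x (r + φ.rOut)).indicator f
  have hu : Integrable u :=
    ((hf.integrableOn_isCompact (isCompact_closedBall x (r + φ.rOut))).mono_set
      ball_subset_closedBall).integrable_indicator measurableSet_ball
  have hfu : EqOn f u (ball x (r + φ.rOut)) := eqOn_indicator.symm
  calc ∫ w in ball x r, mollify φ f w = ∫ w in ball x r, mollify φ u w := by
        refine setIntegral_congr_fun measurableSet_ball fun w hw =>
          mollify_congr_of_eqOn_ball φ (hfu.mono (ball_subset_ball' ?_))
        linarith [mem_ball.1 hw]
    _ = mollify φ (fun z => ∫ w in ball z r, u w) x :=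
        setIntegral_ball_mollify_of_integrable φ hu x r
    _ = mollify φ (fun z => ∫ w in ball z r, f w) x := by
        refine mollify_congr_of_eqOn_ball φ fun z hz => ?_
        refine setIntegral_congr_fun measurableSet_ball (hfu.symm.mono (ball_subset_ball' ?_))
        linarith [mem_ball.1 hz]

theorem tendsto_setAverage_ball_mollify_shrinkingBump [CompleteSpace F] (hf : LocallyIntegrable f)
    (x : E) {r : ℝ} (hr : r ≠ 0) :
    Tendsto (fun k => ⨍ w in ball x r, mollify (shrinkingBump k) f w) atTop
      (𝓝 (⨍ w in ball x r, f w)) := by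
  simp only [setAverage_eq, setIntegral_ball_mollify _ hf]
  exact (ContDiffBump.convolution_tendsto_right_of_continuous (tendsto_rOut_shrinkingBump E)
    (continuous_setIntegral_ball hf hr) x).const_smul _

end MollifyBall

/-! ### The precise representative off a superlevel set of the maximal gradient -/

section PreciseRep

variable {n : ℕ} {f : En n → ℝ} {g : En n → En n} {x y : En n}

theorem preciseRep_eq_of_tendsto {L : ℝ} (hL : Tendsto (ballAvg f x) (𝓝[>] 0) (𝓝 L)) :
    preciseRep f x = L := by
  have hex : ∃ L, Tendsto (fun r => ballAvg f x r) (𝓝[>] 0) (𝓝 L) := ⟨L, hL⟩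
  rw [preciseRep, dif_pos hex]
  exact tendsto_nhds_unique hex.choose_spec hL

theorem dist_ballAvg_preciseRep_le {K : ℝ≥0} (hK : LipschitzOnWith K (ballAvg f x) (Ioi 0)) {r : ℝ}
    (hr : 0 < r) : dist (ballAvg f x r) (preciseRep f x) ≤ K * r := by
  obtain ⟨A, hA, heq⟩ := hK.extend_real
  have hlim : Tendsto (ballAvg f x) (𝓝[>] 0) (𝓝 (A 0)) :=
    (hA.continuous.tendsto 0).mono_left nhdsWithin_le_nhds |>.congr' <|
      eventually_mem_nhdsWithin.mono fun _ hs => (heq hs).symm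
  rw [preciseRep_eq_of_tendsto hlim, heq hr]
  simpa [abs_of_pos hr] using hA.dist_le_mul r 0

theorem setLAverage_enorm_fderiv_mollify_le {φ : ContDiffBump (0 : En n)}
    (hf : LocallyIntegrable f) (hgm : AEStronglyMeasurable g) (hg : HasWeakGradientOn univ f g)
    {l : ℝ≥0∞} (hx : x ∉ maximalSuperlevel g l) {c : En n} {ρ : ℝ} (hφ : φ.rOut ≤ ρ)
    (hc : dist c x ≤ ρ) :
    ⨍⁻ w in ball c ρ, ‖fderiv ℝ (mollify φ f) w‖ₑ ∂volume ≤ n * 3 ^ n * l := by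
  have hρ : 0 < ρ := φ.rOut_pos.trans_le hφ
  have hsub : ball c (ρ + φ.rOut) ⊆ ball x (3 * ρ) := ball_subset_ball' (by linarith)
  have hvol : volume (ball x (3 * ρ)) = 3 ^ n * volume (ball c ρ) := by
    rw [Measure.addHaar_ball_mul_of_pos _ _ three_pos, finrank_euclideanSpace_fin,
      ENNReal.ofReal_pow three_pos.le, ENNReal.ofReal_ofNat, Measure.addHaar_ball_center _ c]
  rw [setLAverage_eq, ENNReal.div_le_iff (measure_ball_pos _ _ hρ).ne' measure_ball_lt_top.ne]
  calc ∫⁻ w in ball c ρ, ‖fderiv ℝ (mollify φ f) w‖ₑ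
      ≤ ∫⁻ w in ball c ρ, n * (bumpDensity φ ⋆ₗ[volume] fun y => ‖g y‖ₑ) w :=
        lintegral_mono fun w => enorm_fderiv_mollify_le φ hf hg w
    _ = n * ∫⁻ w in ball c ρ, (bumpDensity φ ⋆ₗ[volume] fun y => ‖g y‖ₑ) w :=
        lintegral_const_mul' _ _ (ENNReal.natCast_ne_top n)
    _ ≤ n * ∫⁻ w in ball c (ρ + φ.rOut), ‖g w‖ₑ := by
        gcongr (n : ℝ≥0∞) * ?_
        exact setLIntegral_ball_lconvolution_le (measurable_bumpDensity φ)
          (lintegral_bumpDensity φ) (support_bumpDensity φ).subset hgm.enorm c ρ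
    _ ≤ n * ∫⁻ w in ball x (3 * ρ), ‖g w‖ₑ := by
        gcongr (n : ℝ≥0∞) * ?_
        exact lintegral_mono_set hsub
    _ ≤ n * (l * (3 ^ n * volume (ball c ρ))) := by
        grw [setLIntegral_ball_le_of_notMem_maximalSuperlevel hx, hvol]
    _ = n * 3 ^ n * l * volume (ball c ρ) := by ring

theorem edist_ballAvg_le (hf : LocallyIntegrable f) (hgm : AEStronglyMeasurable g)
    (hg : HasWeakGradientOn univ f g) {l : ℝ≥0∞} (hx : x ∉ maximalSuperlevel g l) {r s : ℝ}
    (hr : 0 < r) (hs : 0 < s)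
    (hdist : ∀ t ∈ Ioc (0 : ℝ) 1, dist (AffineMap.lineMap x y t) x ≤ AffineMap.lineMap r s t) :
    edist (ballAvg f y s) (ballAvg f x r) ≤ n * 3 ^ n * l * (edist y x + edist s r) := by
  refine le_of_tendsto ((tendsto_setAverage_ball_mollify_shrinkingBump hf y hs.ne').edist
    (tendsto_setAverage_ball_mollify_shrinkingBump hf x hr.ne')) ?_
  filter_upwards [(tendsto_rOut_shrinkingBump (En n)).eventually_lt_const (lt_min hr hs)] with k hk
  rw [mul_comm, edist_eq_enorm_sub, edist_eq_enorm_sub y x, edist_eq_enorm_sub s r]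
  refine enorm_setAverage_ball_sub_le ((contDiff_mollify _ hf).of_le (by simp)) hr hs
    fun t ht => ?_
  have hmin : min r s ≤ AffineMap.lineMap r s t :=
    (convex_Ici (min r s)).lineMap_mem (min_le_left r s) (min_le_right r s)
      (Ioc_subset_Icc_self ht)
  exact setLAverage_enorm_fderiv_mollify_le hf hgm hg hx (hk.le.trans hmin) (hdist t ht)

theorem lipschitzOnWith_ballAvg_Ioi (hf : LocallyIntegrable f) (hgm : AEStronglyMeasurable g)
    (hg : HasWeakGradientOn univ f g) {l : ℝ≥0} (hx : x ∉ maximalSuperlevel g l) :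
    LipschitzOnWith (n * 3 ^ n * l) (ballAvg f x) (Ioi 0) := by
  intro s hs r hr
  have hdist : ∀ t ∈ Ioc (0 : ℝ) 1,
      dist (AffineMap.lineMap x x t) x ≤ AffineMap.lineMap r s t := fun t ht => by
    rw [AffineMap.lineMap_same_apply, dist_self]
    exact ((convex_Ioi (0 : ℝ)).lineMap_mem hr hs (Ioc_subset_Icc_self ht)).le
  simpa using edist_ballAvg_le hf hgm hg hx hr hs hdist

theorem dist_ballAvg_dist_le (hf : LocallyIntegrable f) (hgm : AEStronglyMeasurable g)
    (hg : HasWeakGradientOn univ f g) {l : ℝ≥0} (hx : x ∉ maximalSuperlevel g l) (y : En n) :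
    dist (ballAvg f y (dist y x)) (ballAvg f x (dist y x)) ≤ n * 3 ^ n * l * dist y x := by
  rcases eq_or_ne y x with rfl | hyx
  · simp
  have hdist : ∀ t ∈ Ioc (0 : ℝ) 1, dist (AffineMap.lineMap x y t) x ≤
      AffineMap.lineMap (dist y x) (dist y x) t := fun t ht => by
    rw [dist_lineMap_left, AffineMap.lineMap_same_apply, Real.norm_of_nonneg ht.1.le, dist_comm x y]
    exact mul_le_of_le_one_left dist_nonneg ht.2
  have hle := edist_ballAvg_le hf hgm hg hx (dist_pos.2 hyx) (dist_pos.2 hyx) hdist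
  rw [edist_self, add_zero, edist_dist, edist_dist] at hle
  simpa [ENNReal.toReal_mul] using ENNReal.toReal_mono (by finiteness) hle

theorem lipschitzOnWith_preciseRep_compl_maximalSuperlevel (hf : LocallyIntegrable f)
    (hgm : AEStronglyMeasurable g) (hg : HasWeakGradientOn univ f g) (l : ℝ≥0) :
    LipschitzOnWith (3 * (n * 3 ^ n * l)) (preciseRep f) (maximalSuperlevel g l)ᶜ := by
  refine .of_dist_le_mul fun y hy x hx => ?_
  rcases eq_or_ne y x with rfl | hyx
  · simp
  set r := dist y x
  have hr : 0 < r := dist_pos.2 hyx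
  have hydist := dist_ballAvg_preciseRep_le (lipschitzOnWith_ballAvg_Ioi hf hgm hg hy) hr
  have hxdist := dist_ballAvg_preciseRep_le (lipschitzOnWith_ballAvg_Ioi hf hgm hg hx) hr
  have hxy := dist_ballAvg_dist_le hf hgm hg hx y
  calc dist (preciseRep f y) (preciseRep f x)
      ≤ dist (preciseRep f y) (ballAvg f y r) + dist (ballAvg f y r) (ballAvg f x r) +
        dist (ballAvg f x r) (preciseRep f x) := dist_triangle4 _ _ _ _
    _ ≤ (3 * (n * 3 ^ n * l) : ℝ≥0) * r := by
        rw [dist_comm (preciseRep f y)]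
        push_cast at hydist hxdist ⊢
        linarith

end PreciseRep

/-! ### Functions with integrable powers -/

section IntegrablePower

variable {α F : Type*} [MeasurableSpace α] {μ : Measure α} [NormedAddCommGroup F] {p : ℝ}

theorem locallyIntegrable_of_integrable_norm_rpow [TopologicalSpace α] [IsLocallyFiniteMeasure μ]
    {u : α → F} (hp : 1 ≤ p) (hu : AEStronglyMeasurable u μ)
    (hup : Integrable (fun x => ‖u x‖ ^ p) μ) : LocallyIntegrable u μ := by
  have hp₀ : ENNReal.ofReal p ≠ 0 := by simpa using one_pos.trans_le hp
  refine MemLp.locallyIntegrable (p := ENNReal.ofReal p) ?_ (by simpa using hp)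
  rwa [← integrable_norm_rpow_iff hu hp₀ ENNReal.ofReal_ne_top,
    ENNReal.toReal_ofReal (by linarith)]

theorem aemeasurable_enorm_of_integrable_norm_rpow {u : α → F} (hp : p ≠ 0)
    (hup : Integrable (fun x => ‖u x‖ ^ p) μ) : AEMeasurable (fun x => ‖u x‖ₑ) μ := by
  have hpow : AEMeasurable (fun x => (‖u x‖ ^ p) ^ p⁻¹) μ :=
    hup.aestronglyMeasurable.aemeasurable.pow_const p⁻¹
  simpa only [Real.rpow_rpow_inv (norm_nonneg _) hp, ofReal_norm] using hpow.ennreal_ofReal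

theorem lintegral_enorm_rpow_ne_top {u : α → F} (hp : 0 ≤ p)
    (hup : Integrable (fun x => ‖u x‖ ^ p) μ) : ∫⁻ x, ‖u x‖ₑ ^ p ∂μ ≠ ∞ := by
  have hfin := hup.hasFiniteIntegral.ne
  simpa only [Real.enorm_rpow_of_nonneg (norm_nonneg _) hp, enorm_norm] using hfin

theorem lintegral_sum_enorm_rpow_ne_top {ι : Type*} {s : Finset ι} {u : ι → α → F} (hp : 1 ≤ p)
    (hup : ∀ i ∈ s, Integrable (fun x => ‖u i x‖ ^ p) μ) :
    ∫⁻ x, (∑ i ∈ s, ‖u i x‖ₑ) ^ p ∂μ ≠ ∞ := by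
  refine ne_top_of_le_ne_top ?_
    (lintegral_mono fun x => ENNReal.rpow_sum_le_const_mul_sum_rpow s (fun i => ‖u i x‖ₑ) hp)
  rw [lintegral_const_mul' _ _ (by finiteness), lintegral_finsetSum' s fun i hi =>
    (aemeasurable_enorm_of_integrable_norm_rpow (by linarith) (hup i hi)).pow_const p]
  exact ENNReal.mul_ne_top (by finiteness) <| ENNReal.sum_ne_top.2 fun i hi =>
    lintegral_enorm_rpow_ne_top (by linarith) (hup i hi)

end IntegrablePower

theorem exists_nnreal_div_rpow_mul_le {p : ℝ} (hp : 0 < p) {a C ε : ℝ≥0∞} (ha : a ≠ ∞)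
    (hC : C ≠ ∞) (hε : 0 < ε) : ∃ l : ℝ≥0, l ≠ 0 ∧ (a / l) ^ p * C ≤ ε := by
  have hdiv : Tendsto (fun l : ℝ≥0 => a / (l : ℝ≥0∞)) atTop (𝓝 0) := by
    simpa using ENNReal.Tendsto.const_div (ENNReal.tendsto_coe_nhds_top.2 tendsto_id) (.inr ha)
  have hlim : Tendsto (fun l : ℝ≥0 => (a / (l : ℝ≥0∞)) ^ p * C) atTop (𝓝 0) := by
    simpa [hp] using ENNReal.Tendsto.mul_const (hdiv.ennrpow_const p) (.inr hC)
  obtain ⟨l, hl, hlε⟩ := ((eventually_ne_atTop 0).and (hlim.eventually_le_const hε)).exists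
  exact ⟨l, hl, hlε⟩

theorem preciseRep_lipschitz_quasicontinuous_general {n : ℕ} {p : ℝ} (hp : 1 ≤ p)
    {f : En n → ℝ} {g : En n → En n} {h : En n → Fin n → En n} (hf : LocallyIntegrable f)
    (hgm : AEStronglyMeasurable g) (hg : HasWeakGradientOn univ f g)
    (hh : ∀ i, HasWeakGradientOn univ (fun x => g x i) fun x => h x i)
    (hgp : Integrable fun x => ‖g x‖ ^ p) (hhp : ∀ i, Integrable fun x => ‖h x i‖ ^ p)
    {ε : ℝ≥0∞} (hε : 0 < ε) :
    ∃ V : Set (En n), IsOpen V ∧ cap p V ≤ ε ∧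
      ∃ K : ℝ≥0, LipschitzOnWith K (preciseRep f) (univ \ V) := by
  have hp₀ : 0 < p := by linarith
  have henergy : sobolevEnergy p g h ≠ ∞ :=
    have := lintegral_enorm_rpow_ne_top hp₀.le hgp
    have := lintegral_sum_enorm_rpow_ne_top (s := Finset.univ) hp fun i _ => hhp i
    by unfold sobolevEnergy; finiteness
  obtain ⟨l, hl, hlε⟩ := exists_nnreal_div_rpow_mul_le (a := 2) hp₀ ENNReal.ofNat_ne_top
    (ENNReal.mul_ne_top (coveringConst_ne_top n hp₀.le) henergy) hε
  refine ⟨maximalSuperlevel g l, isOpen_maximalSuperlevel g l, ?_, 3 * (n * 3 ^ n * l), ?_⟩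
  · exact (cap_maximalSuperlevel_le hp (locallyIntegrable_of_integrable_norm_rpow hp hgm hgp) hh
      (fun i => aemeasurable_enorm_of_integrable_norm_rpow hp₀.ne' (hhp i)) hl).trans hlε
  · rw [← compl_eq_univ_sdiff]
    exact lipschitzOnWith_preciseRep_compl_maximalSuperlevel hf hgm hg l

/-- for `f ∈ W^{2,p}(ℝⁿ)`, the precise representative is `p`-Lipschitz
quasicontinuous. -/
theorem preciseRep_lipschitz_quasicontinuous {n : ℕ} (p : ℝ) (hp : 1 ≤ p)
    (f : En n → ℝ) (g : En n → En n) (h : En n → Fin n → En n)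
    (hf : MemW2p p f g h) :
    ∀ ε : ℝ≥0∞, 0 < ε →
      ∃ V : Set (En n), IsOpen V ∧ cap p V ≤ ε ∧
        ∃ K : ℝ≥0, LipschitzOnWith K (preciseRep f) (Set.univ \ V) := by
  obtain ⟨hfm, hgm, hg, hh, hfp, hgp, hhp⟩ := hf
  exact fun _ => preciseRep_lipschitz_quasicontinuous_general hp
    (locallyIntegrable_of_integrable_norm_rpow hp hfm hfp) hgm hg hh hgp hhp
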